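/- arXiv:2009.10635 — 6 statements merged into one kernel-verified Lean document; each statement's English description precedes it below -/
import Mathlib

section
/- For every s-graphon μ, the shape C(μ) (defined as the weak closure of {Φ(f,μ) : f ∈ FDC}) equals the weak closure of {Φ(f,μ) : f ∈ FD}, where FD is the set of ALL bounded Borel fairly distributed functions; that is, requiring continuity of the fairly distributed functions in the definition of the shape is irrelevant. -/
open MeasureTheory Topology Filter

noncomputable section

/-- The unit square `[0,1]²`. -/
abbrev Sq : Type := unitInterval × unitInterval

/-- Convergence of a sequence of subsets in the Vietoris topology
(upper + lower Vietoris convergence). -/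
def VietorisTendsto {X : Type*} [TopologicalSpace X] (A : ℕ → Set X) (B : Set X) : Prop :=
  (∀ U : Set X, IsOpen U → B ⊆ U → ∀ᶠ n in atTop, A n ⊆ U) ∧
  (∀ U : Set X, IsOpen U → (B ∩ U).Nonempty → ∀ᶠ n in atTop, (A n ∩ U).Nonempty)

/-- A measure on the unit square is symmetric if it is invariant under the coordinate swap. -/
def IsSymmSq (μ : Measure Sq) : Prop := μ.map Prod.swap = μ

/-- s-graphons: symmetric Borel probability measures on the unit square,
with the weak topology. -/
def SGraphon : Type := {μ : ProbabilityMeasure Sq // IsSymmSq (μ : Measure Sq)}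

instance : TopologicalSpace SGraphon :=
  inferInstanceAs (TopologicalSpace {μ : ProbabilityMeasure Sq // IsSymmSq (μ : Measure Sq)})

/-- The underlying measure of an s-graphon. -/
def SGraphon.toMeasure (μ : SGraphon) : Measure Sq := (μ.1 : Measure Sq)

/-- A non-negative bounded Borel function on the unit square is fairly distributed
if all its horizontal and vertical sections integrate (w.r.t. Lebesgue measure) to 1. -/
structure FairlyDistributed (f : Sq → ℝ) : Prop where
  measurable : Measurable f
  nonneg : ∀ p, 0 ≤ f p
  bounded : ∃ C : ℝ, ∀ p, f p ≤ C
  row : ∀ x : unitInterval, ∫ v, f (x, v) = 1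
  col : ∀ y : unitInterval, ∫ u, f (u, y) = 1

/-- The density `φ(f,μ)`. -/
def phiFn (f : Sq → ℝ) (μ : Measure Sq) (p : Sq) : ℝ :=
  ∫ q, f (q.1, p.1) * f (q.2, p.2) ∂μ

/-- The measure `Φ(f,μ)`, with density `φ(f,μ)` w.r.t. 2-dimensional Lebesgue measure. -/
def PhiMeas (f : Sq → ℝ) (μ : Measure Sq) : Measure Sq :=
  volume.withDensity fun p => ENNReal.ofReal (phiFn f μ p)

/-- The shape of a measure `μ` on the unit square: the weak closure of the set of
(s-graphons corresponding to) the measures `Φ(f,μ)`, `f` continuous fairly distributed. -/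
def shapeM (μ : Measure Sq) : Set SGraphon :=
  closure {ν : SGraphon | ∃ f : Sq → ℝ, FairlyDistributed f ∧ Continuous f ∧
    ν.toMeasure = PhiMeas f μ}

/-- The shape `C(μ)` of an s-graphon. -/
def shape (μ : SGraphon) : Set SGraphon := shapeM μ.toMeasure

/-- A fractional partition into `k` parts: non-negative Borel functions on `[0,1]`
summing to the constant function 1, each integrating to `1/k`. -/
def IsFracPartition (k : ℕ) (f : Fin k → unitInterval → ℝ) : Prop :=
  (∀ i, Measurable (f i)) ∧ (∀ i x, 0 ≤ f i x) ∧ (∀ x, ∑ i, f i x = 1) ∧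
    ∀ i, ∫ x, f i x = 1 / k

/-- The `k`-shape `C(μ,k)`: the closure in `ℝ^{k×k}` of the set of density matrices of
fractional partitions into `k` parts. -/
def kShape (μ : Measure Sq) (k : ℕ) : Set (Matrix (Fin k) (Fin k) ℝ) :=
  closure {M | ∃ f : Fin k → unitInterval → ℝ, IsFracPartition k f ∧
    ∀ i j, M i j = ∫ p, f i p.1 * f j p.2 ∂μ}

/-- `M_k^*`: symmetric `k×k` matrices with non-negative entries summing to 1. -/
def Mstar (k : ℕ) : Set (Matrix (Fin k) (Fin k) ℝ) :=
  {M | M.IsSymm ∧ (∀ i j, 0 ≤ M i j) ∧ ∑ i, ∑ j, M i j = 1}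

/-- The index `i` (0-based) with `u ∈ [i/k, (i+1)/k)` (and `i = k-1` for `u = 1`). -/
def gridIdx (k : ℕ) (hk : 0 < k) (u : unitInterval) : Fin k :=
  ⟨min ⌊(u : ℝ) * k⌋₊ (k - 1), lt_of_le_of_lt (min_le_right _ _) (Nat.sub_lt hk one_pos)⟩

/-- The measure `μ_M` associated to a `k×k` matrix `M`: its density w.r.t. 2-dimensional
Lebesgue measure equals `k² M(i,j)` on the square `[i/k,(i+1)/k) × [j/k,(j+1)/k)` (0-based). -/
def muM {k : ℕ} (M : Matrix (Fin k) (Fin k) ℝ) : Measure Sq :=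
  if hk : 0 < k then
    volume.withDensity fun p =>
      ENNReal.ofReal ((k : ℝ) ^ 2 * M (gridIdx k hk p.1) (gridIdx k hk p.2))
  else 0

/-- `C̃(μ,k)`: the `k`-shape of `μ`, interpreted as a set of s-graphons. -/
def kShapeTilde (μ : Measure Sq) (k : ℕ) : Set SGraphon :=
  {ν : SGraphon | ∃ M ∈ kShape μ k, ν.toMeasure = muM M}

/-- The interval `I_i = [i/k, (i+1)/k)` (0-based), with `I_{k-1} = [(k-1)/k, 1]`,
as a subset of `[0,1]`. -/
def Ik (k : ℕ) (i : Fin k) : Set unitInterval :=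
  if (i : ℕ) + 1 = k then Subtype.val ⁻¹' Set.Icc (((i : ℕ) : ℝ) / k) 1
  else Subtype.val ⁻¹' Set.Ico (((i : ℕ) : ℝ) / k) ((((i : ℕ) : ℝ) + 1) / k)

/-! ### Helper lemmas -/


lemma bi {α : Type*} [MeasurableSpace α] {μ : Measure α} [IsFiniteMeasure μ] {h : α → ℝ}
    (hm : Measurable h) (C : ℝ) (hC : ∀ x, |h x| ≤ C) : Integrable h μ :=
  Integrable.of_bound hm.aestronglyMeasurable C (Eventually.of_forall hC)

lemma ci {α : Type*} [TopologicalSpace α] [CompactSpace α] [MeasurableSpace α] [BorelSpace α]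
    {μ : Measure α} [IsFiniteMeasure μ] {h : α → ℝ} (hc : Continuous h) : Integrable h μ := by
  obtain ⟨C, hC⟩ := isCompact_univ.exists_bound_of_continuousOn hc.continuousOn
  exact bi hc.measurable C (fun x => hC x trivial)

lemma abs_sub_bdd {f g : ℝ} {C D : ℝ} (hf0 : |f| ≤ C) (hg0 : |g| ≤ D) : |f - g| ≤ C + D :=
  (abs_sub _ _).trans (add_le_add hf0 hg0)

lemma row_bound {m : Measure unitInterval} [IsFiniteMeasure m] {f g : Sq → ℝ} (hf : Measurable f)
    (hg : Measurable g) {C D : ℝ} (hC : ∀ p, |f p| ≤ C) (hD : ∀ p, |g p| ≤ D) :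
    ∫ x, |(∫ v, f (x, v)) - ∫ v, g (x, v)| ∂m ≤
      ∫ p, |f p - g p| ∂(m.prod (volume : Measure unitInterval)) := by
  have hi : Integrable (fun p => |f p - g p|) (m.prod (volume : Measure unitInterval)) :=
    bi (by fun_prop) (C + D) (fun p => by rw [abs_abs]; exact abs_sub_bdd (hC p) (hD p))
  rw [integral_prod _ hi]
  apply integral_mono_of_nonneg
  · exact Eventually.of_forall fun x => abs_nonneg _
  · exact hi.integral_prod_left
  · refine Eventually.of_forall fun x => ?_
    have h1 : Integrable (fun v => f (x, v)) (volume : Measure unitInterval) :=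
      bi (by fun_prop) C (fun v => hC _)
    have h2 : Integrable (fun v => g (x, v)) (volume : Measure unitInterval) :=
      bi (by fun_prop) D (fun v => hD _)
    change |(∫ v, f (x, v)) - ∫ v, g (x, v)| ≤ ∫ v, |f (x, v) - g (x, v)|
    rw [← integral_sub h1 h2]
    exact abs_integral_le_integral_abs

lemma col_bound {m : Measure unitInterval} [IsFiniteMeasure m] (hm : volume ≤ m) {f g : Sq → ℝ}
    (hf : Measurable f)
    (hg : Measurable g) {C D : ℝ} (hC : ∀ p, |f p| ≤ C) (hD : ∀ p, |g p| ≤ D) :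
    ∫ y, |(∫ u, f (u, y)) - ∫ u, g (u, y)| ≤
      ∫ p, |f p - g p| ∂(m.prod (volume : Measure unitInterval)) := by
  have hi : Integrable (fun p => |f p - g p|) (m.prod (volume : Measure unitInterval)) :=
    bi (by fun_prop) (C + D) (fun p => by rw [abs_abs]; exact abs_sub_bdd (hC p) (hD p))
  rw [integral_prod_symm _ hi]
  apply integral_mono_of_nonneg
  · exact Eventually.of_forall fun x => abs_nonneg _
  · exact hi.integral_prod_right
  · refine Eventually.of_forall fun y => ?_
    have h1 : Integrable (fun u => f (u, y)) (volume : Measure unitInterval) :=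
      bi (by fun_prop) C (fun v => hC _)
    have h2 : Integrable (fun u => g (u, y)) (volume : Measure unitInterval) :=
      bi (by fun_prop) D (fun v => hD _)
    change |(∫ u, f (u, y)) - ∫ u, g (u, y)| ≤ ∫ u, |f (u, y) - g (u, y)| ∂m
    rw [← integral_sub h1 h2]
    refine abs_integral_le_integral_abs.trans ?_
    refine integral_mono_measure hm (Eventually.of_forall fun u => abs_nonneg _) ?_
    exact bi (by fun_prop) (C + D) (fun p => by rw [abs_abs]; exact abs_sub_bdd (hC _) (hD _))

lemma cont_row {f : Sq → ℝ} (hf : Continuous f) : Continuous fun x => ∫ v : unitInterval, f (x, v) := by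
  have := continuous_parametric_integral_of_continuous (μ := (volume : Measure unitInterval))
    (f := fun x v => f (x, v)) hf isCompact_univ
  simpa using this

lemma cont_col {f : Sq → ℝ} (hf : Continuous f) : Continuous fun y => ∫ u : unitInterval, f (u, y) := by
  exact cont_row (f := fun p => f (p.2, p.1)) (by fun_prop)

lemma fix_lemma {m : Measure unitInterval} [IsFiniteMeasure m] (hm : volume ≤ m) {f f0 : Sq → ℝ}
    (hf : FairlyDistributed f) (hc0 : Continuous f0) {C : ℝ} (hC : ∀ p, f p ≤ C)
    (h0 : ∀ p, 0 ≤ f0 p) (h0C : ∀ p, f0 p ≤ C) {δ : ℝ} (hδ : 0 < δ)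
    (happ : ∫ p, |f p - f0 p| ∂(m.prod (volume : Measure unitInterval)) ≤ δ) :
    ∃ g, FairlyDistributed g ∧ Continuous g ∧
      ∫ p, |f p - g p| ∂(m.prod (volume : Measure unitInterval)) ≤
        2 * (1 + C * (1 + 2 * m.real Set.univ)) * δ := by
  have hC0 : 0 ≤ C := (h0 (0, 0)).trans (h0C _)
  set P := m.prod (volume : Measure unitInterval) with hP
  set K := m.real Set.univ with hK
  set r : unitInterval → ℝ := fun x => ∫ v, f0 (x, v) with hr
  set c : unitInterval → ℝ := fun y => ∫ u, f0 (u, y) with hcdef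
  have hrc : Continuous r := cont_row hc0
  have hcc : Continuous c := cont_col hc0
  have hr0 : ∀ x, 0 ≤ r x := fun x => integral_nonneg fun v => h0 _
  have hcol0 : ∀ y, 0 ≤ c y := fun x => integral_nonneg fun v => h0 _
  set A : unitInterval → ℝ := fun x => 1 + δ + |r x - 1| with hA
  set B : unitInterval → ℝ := fun y => 1 + |c y - 1| with hB
  have hA1 : ∀ x, 1 ≤ A x := fun x => by have := abs_nonneg (r x - 1); simp only [hA]; linarith
  have hB1 : ∀ x, 1 ≤ B x := fun x => by have := abs_nonneg (c x - 1); simp only [hB]; linarith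
  have hAr : ∀ x, r x < A x := fun x => by have := le_abs_self (r x - 1); simp only [hA]; linarith
  have hBc : ∀ x, c x ≤ B x := fun x => by have := le_abs_self (c x - 1); simp only [hB]; linarith
  have hAB1 : ∀ x y, 1 ≤ A x * B y := fun x y => one_le_mul_of_one_le_of_one_le (hA1 x) (hB1 y)
  set f2 : Sq → ℝ := fun p => f0 p / (A p.1 * B p.2) with hf2
  have hf2c : Continuous f2 := by
    refine hc0.div (by fun_prop) (fun p => ?_)
    have := hAB1 p.1 p.2; linarith
  have hf20 : ∀ p, 0 ≤ f2 p := fun p => div_nonneg (h0 p) (by have := hAB1 p.1 p.2; linarith)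
  have hf2le : ∀ p, f2 p ≤ f0 p := fun p => div_le_self (h0 p) (hAB1 _ _)
  have hrowI : ∀ {g : Sq → ℝ}, Continuous g → ∀ x, Integrable (fun v => g (x, v))
    (volume : Measure unitInterval) := fun hg x => ci (by fun_prop)
  have hcolI : ∀ {g : Sq → ℝ}, Continuous g → ∀ y, Integrable (fun u => g (u, y))
    (volume : Measure unitInterval) := fun hg x => ci (by fun_prop)
  set a : unitInterval → ℝ := fun x => 1 - ∫ v, f2 (x, v) with ha
  set b : unitInterval → ℝ := fun y => 1 - ∫ u, f2 (u, y) with hb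
  have hac : Continuous a := continuous_const.sub (cont_row hf2c)
  have hbc : Continuous b := continuous_const.sub (cont_col hf2c)
  have ha0 : ∀ x, 0 < a x := by
    intro x
    have : ∫ v, f2 (x, v) ≤ ∫ v, f0 (x, v) / A x := by
      refine integral_mono (hrowI hf2c x) ((hrowI hc0 x).div_const _) fun v => ?_
      refine div_le_div_of_nonneg_left (h0 _) (by linarith [hA1 x]) ?_
      exact le_mul_of_one_le_right (by linarith [hA1 x]) (hB1 v)
    rw [integral_div] at this
    have h2 : r x / A x < 1 := (div_lt_one (by linarith [hA1 x])).2 (hAr x)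
    simp only [ha]; simp only [hr] at h2; linarith
  have hb0 : ∀ x, 0 ≤ b x := by
    intro y
    have : ∫ u, f2 (u, y) ≤ ∫ u, f0 (u, y) / B y := by
      refine integral_mono (hcolI hf2c y) ((hcolI hc0 y).div_const _) fun v => ?_
      refine div_le_div_of_nonneg_left (h0 _) (by linarith [hB1 y]) ?_
      exact le_mul_of_one_le_left (by linarith [hB1 y]) (hA1 v)
    rw [integral_div] at this
    have h2 : c y / B y ≤ 1 := (div_le_one (by linarith [hB1 y])).2 (hBc y)
    simp only [hb]; simp only [hcdef] at h2; linarith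
  set s := ∫ x, a x with hs
  have hspos : 0 < s := by
    rw [hs, integral_pos_iff_support_of_nonneg (fun x => (ha0 x).le) (ci hac)]
    have : Function.support a = Set.univ := by
      ext x; simp [(ha0 x).ne']
    rw [this]; simp
  have hsb : ∫ y, b y = s := by
    simp only [hs, ha, hb]
    rw [integral_sub (by simp) (ci (cont_row hf2c)), integral_sub (by simp) (ci (cont_col hf2c))]
    congr 1
    exact (integral_integral_swap (f := fun x y => f2 (x, y)) (ci hf2c)).symm
  set g : Sq → ℝ := fun p => f2 p + a p.1 * b p.2 / s with hg
  have hgc : Continuous g := by simp only [hg]; fun_prop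
  have hg0 : ∀ p, 0 ≤ g p := fun p =>
    add_nonneg (hf20 p) (div_nonneg (mul_nonneg (ha0 _).le (hb0 _)) hspos.le)
  have hgFD : FairlyDistributed g := by
    refine ⟨hgc.measurable, hg0, ?_, ?_, ?_⟩
    · obtain ⟨D, hD⟩ := isCompact_univ.exists_bound_of_continuousOn hgc.continuousOn
      exact ⟨D, fun p => (le_abs_self _).trans (hD p trivial)⟩
    · intro x
      simp only [hg]
      rw [integral_add (hrowI hf2c x) (ci (by fun_prop)), integral_div, integral_const_mul, hsb,
        mul_div_assoc, div_self hspos.ne']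
      simp [ha]
    · intro x
      simp only [hg]
      rw [integral_add (hcolI hf2c x) (ci (by fun_prop)), integral_div, integral_mul_const, ← hs,
        mul_comm, mul_div_assoc, div_self hspos.ne']
      simp [hb]
  have hfb : ∀ p, |f p| ≤ C := fun p => by rw [abs_of_nonneg (hf.nonneg p)]; exact hC p
  have hf0b : ∀ p, |f0 p| ≤ C := fun p => by rw [abs_of_nonneg (h0 p)]; exact h0C p
  have hf2b : ∀ p, |f2 p| ≤ C := fun p => by
    rw [abs_of_nonneg (hf20 p)]; exact (hf2le p).trans (h0C p)
  have hfm := hf.measurable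
  have hf0m := hc0.measurable
  have hf2m := hf2c.measurable
  have hgm := hgc.measurable
  have hK0 : 0 ≤ K := measureReal_nonneg
  -- row and column errors
  have hrow : ∫ x, |r x - 1| ∂m ≤ δ := by
    refine le_trans (le_of_eq ?_) ((row_bound (m := m) hfm hf0m hfb hf0b).trans happ)
    refine integral_congr_ae (Eventually.of_forall fun x => ?_)
    simp only [hf.row, hr]; exact abs_sub_comm _ _
  have hcol : ∫ x, |c x - 1| ≤ δ := by
    refine le_trans (le_of_eq ?_) ((col_bound hm hfm hf0m hfb hf0b).trans happ)
    refine integral_congr_ae (Eventually.of_forall fun x => ?_)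
    simp only [hf.col, hcdef]; exact abs_sub_comm _ _
  have hi1 : Integrable (fun p => |f p - f0 p|) P :=
    bi (by fun_prop) (C + C) (fun p => by rw [abs_abs]; exact abs_sub_bdd (hfb p) (hf0b p))
  have hi2 : Integrable (fun p => |f p - f2 p|) P :=
    bi (by fun_prop) (C + C) (fun p => by rw [abs_abs]; exact abs_sub_bdd (hfb p) (hf2b p))
  have hi3 : Integrable (fun p => |f0 p - f2 p|) P := ci (by fun_prop)
  have hi4 : Integrable (fun p => a p.1 * b p.2 / s) P := ci (by fun_prop)
  have hE1 : ∫ p, |f0 p - f2 p| ∂P ≤ C * (1 + 2 * K) * δ := by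
    have hle : ∫ p, |f0 p - f2 p| ∂P ≤
        ∫ p : Sq, ((C * (δ + |r p.1 - 1|)) * 1 + C * |c p.2 - 1|) ∂P := by
      refine integral_mono hi3 (ci (by fun_prop)) fun p => ?_
      have hx : 0 < A p.1 * B p.2 := by linarith [hAB1 p.1 p.2]
      have h1 : f2 p * (A p.1 * B p.2) = f0 p := div_mul_cancel₀ _ hx.ne'
      have h2 : |f0 p - f2 p| = f0 p - f2 p := abs_of_nonneg (by linarith [hf2le p])
      have hA' : A p.1 = 1 + (δ + |r p.1 - 1|) := by simp only [hA]; ring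
      have hB' : B p.2 = 1 + |c p.2 - 1| := rfl
      simp only [h2]
      have hα : 0 ≤ δ + |r p.1 - 1| := by positivity
      have hβ : 0 ≤ |c p.2 - 1| := by positivity
      generalize δ + |r p.1 - 1| = α at *
      generalize |c p.2 - 1| = β at *
      have h3 : f2 p * A p.1 ≤ C := by
        refine le_trans ?_ (h0C p)
        rw [← h1, ← mul_assoc]
        exact le_mul_of_one_le_right (mul_nonneg (hf20 p) (by linarith [hA1 p.1])) (hB1 _)
      have h4 : f2 p ≤ C := (hf2le p).trans (h0C p)
      have : f0 p - f2 p = f2 p * α + f2 p * A p.1 * β := by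
        rw [← h1, hB', hA']; ring
      rw [this, mul_one]
      exact add_le_add (mul_le_mul_of_nonneg_right h4 hα) (mul_le_mul_of_nonneg_right h3 hβ)
    refine hle.trans ?_
    rw [integral_add (ci (by fun_prop)) (ci (by fun_prop)), hP]
    have e1 : ∫ p : Sq, (C * (δ + |r p.1 - 1|)) * 1 ∂(m.prod (volume : Measure unitInterval)) =
        C * (δ * K + ∫ x, |r x - 1| ∂m) := by
      rw [integral_prod_mul (fun x => C * (δ + |r x - 1|)) (fun _ : unitInterval => (1 : ℝ))]
      rw [integral_const_mul, integral_add (by simp) (ci (by fun_prop))]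
      simp [hK, mul_comm]
    have e2 : ∫ p : Sq, C * |c p.2 - 1| ∂(m.prod (volume : Measure unitInterval)) =
        C * K * ∫ x, |c x - 1| := by
      rw [integral_prod_mul (fun x => C) (fun y : unitInterval => |c y - 1|)]
      simp [hK, mul_comm]
    rw [e1, e2]
    have t1 := mul_le_mul_of_nonneg_left hrow hC0
    have t2 := mul_le_mul_of_nonneg_left hcol (mul_nonneg hC0 hK0)
    nlinarith
  have hE2 : ∫ p, |f p - f2 p| ∂P ≤ (1 + C * (1 + 2 * K)) * δ := by
    have : ∫ p, |f p - f2 p| ∂P ≤ ∫ p, (|f p - f0 p| + |f0 p - f2 p|) ∂P :=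
      integral_mono hi2 (hi1.add hi3) fun p => abs_sub_le _ _ _
    rw [integral_add hi1 hi3] at this
    linarith
  have hE3 : ∫ p : Sq, a p.1 * b p.2 / s ∂P ≤ ∫ p, |f p - f2 p| ∂P := by
    rw [integral_div, hP, integral_prod_mul, hsb, mul_div_assoc, div_self hspos.ne', mul_one]
    refine le_trans (le_of_eq ?_) (row_bound (m := m) hfm hf2m hfb hf2b)
    refine integral_congr_ae (Eventually.of_forall fun x => ?_)
    simp only [hf.row]
    exact (abs_of_pos (ha0 x)).symm
  refine ⟨g, hgFD, hgc, ?_⟩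
  have : ∫ p, |f p - g p| ∂P ≤ ∫ p : Sq, (|f p - f2 p| + a p.1 * b p.2 / s) ∂P := by
    refine integral_mono_of_nonneg (Eventually.of_forall fun p => abs_nonneg _) (hi2.add hi4)
      (Eventually.of_forall fun p => ?_)
    have h1 : 0 ≤ a p.1 * b p.2 / s := div_nonneg (mul_nonneg (ha0 _).le (hb0 _)) hspos.le
    have h2 : f p - g p = (f p - f2 p) - a p.1 * b p.2 / s := by simp only [hg]; ring
    simp only [h2]
    exact (abs_sub _ _).trans (by rw [abs_of_nonneg h1])
  rw [integral_add hi2 hi4] at this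
  linarith

lemma approx_lemma {m : Measure unitInterval} [IsFiniteMeasure m] (hm : volume ≤ m) {f : Sq → ℝ}
    (hf : FairlyDistributed f) {ε : ℝ} (hε : 0 < ε) :
    ∃ g, FairlyDistributed g ∧ Continuous g ∧
      ∫ p, |f p - g p| ∂(m.prod (volume : Measure unitInterval)) ≤ ε := by
  obtain ⟨C, hC⟩ := hf.bounded
  have hC0 : 0 ≤ C := (hf.nonneg (0, 0)).trans (hC _)
  have hfm := hf.measurable
  have hK0 : 0 ≤ m.real Set.univ := measureReal_nonneg
  set L := 2 * (1 + C * (1 + 2 * m.real Set.univ)) with hL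
  have hLpos : 0 < L := by positivity
  have hfb : ∀ p, |f p| ≤ C := fun p => by rw [abs_of_nonneg (hf.nonneg p)]; exact hC p
  have hfi : Integrable f (m.prod (volume : Measure unitInterval)) := bi hfm C hfb
  obtain ⟨g0, hg0, hg0i⟩ := hfi.exists_boundedContinuous_integral_sub_le (div_pos hε hLpos)
  set f0 : Sq → ℝ := fun p => max 0 (min C (g0 p)) with hf0
  have hg0c : Continuous g0 := g0.continuous
  have hc0 : Continuous f0 := by simp only [hf0]; fun_prop
  have happ : ∫ p, |f p - f0 p| ∂(m.prod (volume : Measure unitInterval)) ≤ ε / L := by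
    refine le_trans ?_ hg0
    refine integral_mono_of_nonneg (Eventually.of_forall fun p => abs_nonneg _)
      (hfi.sub hg0i).norm (Eventually.of_forall fun p => ?_)
    have h1 := hf.nonneg p
    have h2 := hC p
    simp only [hf0, Real.norm_eq_abs]
    generalize g0 p = z
    generalize f p = w at *
    have e1 : max 0 w = w := max_eq_right h1
    have e2 : min C w = w := min_eq_right h2
    calc |w - max 0 (min C z)| = |max 0 w - max 0 (min C z)| := by rw [e1]
      _ ≤ |w - min C z| := by simpa using abs_max_sub_max_le_max 0 w 0 (min C z)
      _ = |min C w - min C z| := by rw [e2]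
      _ ≤ |w - z| := by simpa using abs_min_sub_min_le_max C w C z
  obtain ⟨g, h1, h2, h3⟩ := fix_lemma hm hf hc0 hC (fun p => le_max_left _ _)
    (fun p => max_le hC0 (min_le_left _ _)) (div_pos hε hLpos) happ
  refine ⟨g, h1, h2, h3.trans (le_of_eq ?_)⟩
  rw [← hL]; field_simp

lemma kernel_meas {f : Sq → ℝ} (hf : Measurable f) :
    Measurable fun z : Sq × Sq => f (z.1.1, z.2.1) * f (z.1.2, z.2.2) := by fun_prop

lemma kernel_bdd {f : Sq → ℝ} {C : ℝ} (hC : ∀ p, |f p| ≤ C) (z : Sq × Sq) :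
    |f (z.1.1, z.2.1) * f (z.1.2, z.2.2)| ≤ C * C := by
  rw [abs_mul]
  exact mul_le_mul (hC _) (hC _) (abs_nonneg _) ((abs_nonneg _).trans (hC z.1))

lemma FairlyDistributed.abs_bdd {f : Sq → ℝ} (hf : FairlyDistributed f) :
    ∃ C : ℝ, ∀ p, |f p| ≤ C := by
  obtain ⟨C, hC⟩ := hf.bounded
  exact ⟨C, fun p => by rw [abs_of_nonneg (hf.nonneg p)]; exact hC p⟩

lemma phi_meas {f : Sq → ℝ} (hf : Measurable f) (μ : Measure Sq) [IsProbabilityMeasure μ] :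
    Measurable (phiFn f μ) := by
  have h : StronglyMeasurable (Function.uncurry
      fun (p q : Sq) => f (q.1, p.1) * f (q.2, p.2)) := by
    refine Measurable.stronglyMeasurable ?_
    simp only [Function.uncurry_def]
    fun_prop
  exact (StronglyMeasurable.integral_prod_right (ν := μ) h).measurable

lemma phi_nonneg {f : Sq → ℝ} (hf : FairlyDistributed f) (μ : Measure Sq) (p : Sq) :
    0 ≤ phiFn f μ p :=
  integral_nonneg fun q => mul_nonneg (hf.nonneg _) (hf.nonneg _)

lemma kernel_int {f : Sq → ℝ} (hf : FairlyDistributed f) (μ : Measure Sq)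
    [IsProbabilityMeasure μ] :
    Integrable (fun z : Sq × Sq => f (z.1.1, z.2.1) * f (z.1.2, z.2.2))
      (μ.prod (volume : Measure Sq)) := by
  obtain ⟨C, hC⟩ := hf.abs_bdd
  exact bi (kernel_meas hf.measurable) (C * C) (kernel_bdd hC)

lemma phi_int {f : Sq → ℝ} (hf : FairlyDistributed f) (μ : Measure Sq)
    [IsProbabilityMeasure μ] : Integrable (phiFn f μ) (volume : Measure Sq) :=
  (kernel_int hf μ).integral_prod_right

lemma phi_integral {f : Sq → ℝ} (hf : FairlyDistributed f) (μ : Measure Sq)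
    [IsProbabilityMeasure μ] : ∫ p, phiFn f μ p = 1 := by
  have h := integral_integral_swap (μ := μ) (ν := (volume : Measure Sq))
    (f := fun q p => f (q.1, p.1) * f (q.2, p.2)) (kernel_int hf μ)
  simp only [phiFn]
  rw [← h]
  have : ∀ q : Sq, ∫ p : Sq, f (q.1, p.1) * f (q.2, p.2) = 1 := by
    intro q
    rw [Measure.volume_eq_prod, integral_prod_mul (fun u => f (q.1, u)) (fun v => f (q.2, v)),
      hf.row, hf.row, one_mul]
  simp [this]

lemma PhiMeas_prob {f : Sq → ℝ} (hf : FairlyDistributed f) (μ : Measure Sq)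
    [IsProbabilityMeasure μ] : IsProbabilityMeasure (PhiMeas f μ) := by
  constructor
  rw [PhiMeas, withDensity_apply _ MeasurableSet.univ, Measure.restrict_univ,
    ← ofReal_integral_eq_lintegral_ofReal (phi_int hf μ)
      (Eventually.of_forall (phi_nonneg hf μ)), phi_integral hf μ, ENNReal.ofReal_one]

lemma phi_swap {f : Sq → ℝ} (hf : Measurable f) {μ : Measure Sq} (hμ : IsSymmSq μ) (p : Sq) :
    phiFn f μ p.swap = phiFn f μ p := by
  simp only [phiFn, Prod.fst_swap, Prod.snd_swap]
  conv_lhs => rw [← hμ]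
  rw [integral_map measurable_swap.aemeasurable (by fun_prop)]
  simp only [Prod.fst_swap, Prod.snd_swap]
  exact integral_congr_ae (Eventually.of_forall fun q => mul_comm _ _)

lemma PhiMeas_symm {f : Sq → ℝ} (hf : Measurable f) {μ : Measure Sq} [IsProbabilityMeasure μ]
    (hμ : IsSymmSq μ) : IsSymmSq (PhiMeas f μ) := by
  have hd : Measurable fun p => ENNReal.ofReal (phiFn f μ p) := (phi_meas hf μ).ennreal_ofReal
  have hmp : MeasurePreserving (Prod.swap : Sq → Sq) volume volume :=
    Measure.measurePreserving_swap
  ext s hs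
  rw [Measure.map_apply measurable_swap hs, PhiMeas,
    withDensity_apply _ (measurable_swap hs), withDensity_apply _ hs,
    ← hmp.setLIntegral_comp_preimage hs hd]
  simp only [phi_swap hf hμ]

lemma phi_diff {f g : Sq → ℝ} (hf : FairlyDistributed f) (hg : FairlyDistributed g)
    (μ : Measure Sq) [IsProbabilityMeasure μ] (m : Measure unitInterval) [IsFiniteMeasure m]
    (h1 : μ.map Prod.fst ≤ m) (h2 : μ.map Prod.snd ≤ m) :
    ∫ p, |phiFn f μ p - phiFn g μ p| ≤
      2 * ∫ p, |f p - g p| ∂(m.prod (volume : Measure unitInterval)) := by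
  obtain ⟨C, hC⟩ := hf.abs_bdd
  obtain ⟨D, hD⟩ := hg.abs_bdd
  have hfm := hf.measurable
  have hgm := hg.measurable
  set d : Sq → ℝ := fun p => |f p - g p| with hd
  have hdm : Measurable d := by simp only [hd]; fun_prop
  have hdb : ∀ p, |d p| ≤ C + D := fun p => by
    simp only [hd]; rw [abs_abs]; exact abs_sub_bdd (hC p) (hD p)
  have hdI : Integrable d (m.prod (volume : Measure unitInterval)) := bi hdm _ hdb
  set E : unitInterval → ℝ := fun x => ∫ v, d (x, v) with hE
  have hE0 : ∀ x, 0 ≤ E x := fun x => integral_nonneg fun v => abs_nonneg _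
  have hEm : Measurable E := by
    have : StronglyMeasurable (Function.uncurry fun x v => d (x, v)) := hdm.stronglyMeasurable
    exact (this.integral_prod_right (ν := (volume : Measure unitInterval))).measurable
  have hEI : Integrable E m := hdI.integral_prod_left
  have hdE : ∫ p, d p ∂(m.prod (volume : Measure unitInterval)) = ∫ x, E x ∂m := integral_prod _ hdI
  have hE1 : ∫ q, E q.1 ∂μ ≤ ∫ x, E x ∂m := by
    rw [← integral_map measurable_fst.aemeasurable hEm.aestronglyMeasurable]
    exact integral_mono_measure h1 (Eventually.of_forall hE0) hEI
  have hE2 : ∫ q, E q.2 ∂μ ≤ ∫ x, E x ∂m := by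
    rw [← integral_map measurable_snd.aemeasurable hEm.aestronglyMeasurable]
    exact integral_mono_measure h2 (Eventually.of_forall hE0) hEI
  have hE1I : Integrable (fun q : Sq => E q.1) μ :=
    (hEI.mono_measure h1).comp_measurable measurable_fst
  have hE2I : Integrable (fun q : Sq => E q.2) μ :=
    (hEI.mono_measure h2).comp_measurable measurable_snd
  set H : Sq × Sq → ℝ := fun z =>
    d (z.1.1, z.2.1) * f (z.1.2, z.2.2) + g (z.1.1, z.2.1) * d (z.1.2, z.2.2) with hH
  have hCD : 0 ≤ C + D := (abs_nonneg _).trans (hdb (0, 0))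
  have hHI1 : Integrable (fun z : Sq × Sq => d (z.1.1, z.2.1) * f (z.1.2, z.2.2))
      (μ.prod (volume : Measure Sq)) := by
    refine bi (by fun_prop) ((C + D) * C) fun z => ?_
    rw [abs_mul]
    exact mul_le_mul (hdb _) (hC _) (abs_nonneg _) hCD
  have hHI2 : Integrable (fun z : Sq × Sq => g (z.1.1, z.2.1) * d (z.1.2, z.2.2))
      (μ.prod (volume : Measure Sq)) := by
    refine bi (by fun_prop) (D * (C + D)) fun z => ?_
    rw [abs_mul]
    exact mul_le_mul (hD _) (hdb _) (abs_nonneg _) ((abs_nonneg _).trans (hD (0, 0)))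
  have hHI : Integrable H (μ.prod (volume : Measure Sq)) := hHI1.add hHI2
  have step1 : ∫ p, |phiFn f μ p - phiFn g μ p| ≤ ∫ p : Sq, ∫ q : Sq, H (q, p) ∂μ := by
    refine integral_mono_of_nonneg (Eventually.of_forall fun p => abs_nonneg _)
      hHI.integral_prod_right (Eventually.of_forall fun p => ?_)
    have i1 : Integrable (fun q : Sq => f (q.1, p.1) * f (q.2, p.2)) μ :=
      bi (by fun_prop) (C * C) fun q => kernel_bdd hC (q, p)
    have i2 : Integrable (fun q : Sq => g (q.1, p.1) * g (q.2, p.2)) μ :=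
      bi (by fun_prop) (D * D) fun q => kernel_bdd hD (q, p)
    simp only [phiFn]
    rw [← integral_sub i1 i2]
    refine abs_integral_le_integral_abs.trans ?_
    refine integral_mono_of_nonneg (Eventually.of_forall fun p => abs_nonneg _) ?_
      (Eventually.of_forall fun q => ?_)
    · refine bi (by simp only [hH]; fun_prop) ((C + D) * C + D * (C + D)) fun q => ?_
      refine (abs_add_le _ _).trans (add_le_add ?_ ?_)
      · rw [abs_mul]
        exact mul_le_mul (hdb _) (hC _) (abs_nonneg _) hCD
      · rw [abs_mul]
        exact mul_le_mul (hD _) (hdb _) (abs_nonneg _) ((abs_nonneg _).trans (hD (0, 0)))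
    · simp only [hH, hd]
      have e : f (q.1, p.1) * f (q.2, p.2) - g (q.1, p.1) * g (q.2, p.2) =
        (f (q.1, p.1) - g (q.1, p.1)) * f (q.2, p.2) +
          g (q.1, p.1) * (f (q.2, p.2) - g (q.2, p.2)) := by ring
      rw [e]
      refine (abs_add_le _ _).trans (le_of_eq ?_)
      rw [abs_mul, abs_mul, abs_of_nonneg (hf.nonneg _), abs_of_nonneg (hg.nonneg _)]
  have step2 : ∫ p : Sq, ∫ q : Sq, H (q, p) ∂μ = ∫ q : Sq, ∫ p : Sq, H (q, p) ∂volume ∂μ :=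
    (integral_integral_swap (f := fun q p => H (q, p)) hHI).symm
  have step3 : ∀ q : Sq, ∫ p : Sq, H (q, p) = E q.1 + E q.2 := by
    intro q
    simp only [hH]
    have k1 : Integrable (fun p : Sq => d (q.1, p.1) * f (q.2, p.2)) volume :=
      bi (by fun_prop) ((C + D) * C) fun z => by
        rw [abs_mul]
        exact mul_le_mul (hdb _) (hC _) (abs_nonneg _) hCD
    have k2 : Integrable (fun p : Sq => g (q.1, p.1) * d (q.2, p.2)) volume :=
      bi (by fun_prop) (D * (C + D)) fun z => by
        rw [abs_mul]
        exact mul_le_mul (hD _) (hdb _) (abs_nonneg _) ((abs_nonneg _).trans (hD (0, 0)))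
    rw [integral_add k1 k2, Measure.volume_eq_prod,
      integral_prod_mul (fun u => d (q.1, u)) (fun v => f (q.2, v)),
      integral_prod_mul (fun u => g (q.1, u)) (fun v => d (q.2, v)), hf.row, hg.row,
      one_mul, mul_one]
  rw [step2] at step1
  simp only [step3] at step1
  rw [integral_add hE1I hE2I] at step1
  rw [hdE]
  linarith

lemma integral_PhiMeas {f : Sq → ℝ} (hf : FairlyDistributed f) (μ : Measure Sq)
    [IsProbabilityMeasure μ] (h : Sq → ℝ) :
    ∫ p, h p ∂(PhiMeas f μ) = ∫ p, phiFn f μ p * h p := by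
  rw [PhiMeas, integral_withDensity_eq_integral_toReal_smul
    (phi_meas hf.measurable μ).ennreal_ofReal (Eventually.of_forall fun p => ENNReal.ofReal_lt_top)]
  refine integral_congr_ae (Eventually.of_forall fun p => ?_)
  simp [ENNReal.toReal_ofReal (phi_nonneg hf μ p)]

lemma integral_PhiMeas_diff {f g : Sq → ℝ} (hf : FairlyDistributed f)
    (hg : FairlyDistributed g) (μ : Measure Sq) [IsProbabilityMeasure μ]
    (h : BoundedContinuousFunction Sq ℝ) :
    |∫ p, h p ∂(PhiMeas g μ) - ∫ p, h p ∂(PhiMeas f μ)| ≤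
      ‖h‖ * ∫ p, |phiFn f μ p - phiFn g μ p| := by
  rw [integral_PhiMeas hf, integral_PhiMeas hg]
  have hhm : AEStronglyMeasurable (fun p => h p) (volume : Measure Sq) :=
    h.continuous.aestronglyMeasurable
  have hb : ∀ᵐ p ∂(volume : Measure Sq), ‖h p‖ ≤ ‖h‖ :=
    Eventually.of_forall fun p => h.norm_coe_le_norm p
  have i1 : Integrable (fun p => phiFn f μ p * h p) volume := (phi_int hf μ).mul_bdd hhm hb
  have i2 : Integrable (fun p => phiFn g μ p * h p) volume := (phi_int hg μ).mul_bdd hhm hb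
  rw [← integral_sub i2 i1, ← integral_const_mul]
  refine abs_integral_le_integral_abs.trans ?_
  refine integral_mono_of_nonneg (Eventually.of_forall fun p => abs_nonneg _)
    (((phi_int hf μ).sub (phi_int hg μ)).abs.const_mul _) (Eventually.of_forall fun p => ?_)
  have e : phiFn g μ p * h p - phiFn f μ p * h p = h p * (phiFn g μ p - phiFn f μ p) := by ring
  simp only [e]
  rw [abs_mul, abs_sub_comm (phiFn g μ p)]
  exact mul_le_mul_of_nonneg_right (h.norm_coe_le_norm p) (abs_nonneg _)

lemma fd_mem_shape (μ ν : SGraphon) {f : Sq → ℝ} (hf : FairlyDistributed f)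
    (hν : ν.toMeasure = PhiMeas f μ.toMeasure) : ν ∈ shape μ := by
  haveI : IsProbabilityMeasure μ.toMeasure := μ.1.2
  set M := μ.toMeasure with hM
  set m : Measure unitInterval := M.map Prod.fst + M.map Prod.snd + volume with hm
  have l1 : M.map Prod.fst ≤ m := (Measure.le_add_right le_rfl).trans (Measure.le_add_right le_rfl)
  have l2 : M.map Prod.snd ≤ m := (Measure.le_add_left le_rfl).trans (Measure.le_add_right le_rfl)
  have l3 : volume ≤ m := Measure.le_add_left le_rfl
  have hex : ∀ n : ℕ, ∃ g, FairlyDistributed g ∧ Continuous g ∧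
      ∫ p, |f p - g p| ∂(m.prod (volume : Measure unitInterval)) ≤ 1 / ((n : ℝ) + 1) :=
    fun n => approx_lemma l3 hf (by positivity)
  choose g hg hgc hgd using hex
  let νs : ℕ → SGraphon := fun n =>
    ⟨⟨PhiMeas (g n) M, PhiMeas_prob (hg n) M⟩, PhiMeas_symm (hg n).measurable μ.2⟩
  have ht : Tendsto νs atTop (𝓝 ν) := by
    refine tendsto_subtype_rng.2 ?_
    rw [ProbabilityMeasure.tendsto_iff_forall_integral_tendsto]
    intro h
    have hν' : (ν.1 : Measure Sq) = PhiMeas f M := hν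
    change Tendsto (fun n => ∫ p, h p ∂(PhiMeas (g n) M)) atTop
      (𝓝 (∫ p, h p ∂(ν.1 : Measure Sq)))
    rw [hν', tendsto_iff_norm_sub_tendsto_zero]
    have hlim : Tendsto (fun n : ℕ => ‖h‖ * (2 * (1 / ((n : ℝ) + 1)))) atTop (𝓝 0) := by
      simpa using (tendsto_one_div_add_atTop_nhds_zero_nat.const_mul (2 : ℝ)).const_mul ‖h‖
    refine squeeze_zero (fun n => norm_nonneg _) (fun n => ?_) hlim
    refine (integral_PhiMeas_diff hf (hg n) M h).trans ?_
    refine mul_le_mul_of_nonneg_left ?_ (norm_nonneg _)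
    exact (phi_diff hf (hg n) M m l1 l2).trans (mul_le_mul_of_nonneg_left (hgd n) zero_le_two)
  exact mem_closure_of_tendsto ht (Eventually.of_forall fun n => ⟨g n, hg n, hgc n, rfl⟩)

/-- Proposition `prop:BC`. For every s-graphon `μ`, the shape `C(μ)` (the weak
closure of `{Φ(f,μ) : f ∈ FDC}`) equals the weak closure of `{Φ(f,μ) : f ∈ FD}`, where `FD`
is the set of all bounded Borel fairly distributed functions. -/
theorem stmt6 (μ : SGraphon) :
    shape μ =
      closure {ν : SGraphon | ∃ f : Sq → ℝ, FairlyDistributed f ∧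
        ν.toMeasure = PhiMeas f μ.toMeasure} := by
  apply Set.Subset.antisymm
  · refine closure_mono ?_
    rintro ν ⟨f, hf, _, hν⟩
    exact ⟨f, hf, hν⟩
  · refine closure_minimal ?_ isClosed_closure
    rintro ν ⟨f, hf, hν⟩
    exact fd_mem_shape μ ν hf hν

end
end

section
/- Let μ be an s-graphon, let C > 0, and let g, h : [0,1]² → [0,C] be bounded Borel fairly distributed functions. Then ‖φ(g,μ) − φ(h,μ)‖_{L¹([0,1]², λ²)} ≤ C · ( ‖g − h‖_{L¹([0,1]², μ⁽²⁾ × λ)} + ‖g − h‖_{L¹([0,1]², μ⁽¹⁾ × λ)} ), where μ⁽¹⁾ and μ⁽²⁾ are the marginals of μ on the first and second coordinate respectively. -/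
open MeasureTheory Topology Filter

noncomputable section

/-- Bounded measurable functions are integrable for finite measures. -/
lemma integrable_aux {α : Type*} [MeasurableSpace α] (ν : Measure α) [IsFiniteMeasure ν]
    (f : α → ℝ) (hf : Measurable f) (C : ℝ) (h0 : ∀ a, 0 ≤ f a) (h : ∀ a, f a ≤ C) :
    Integrable f ν :=
  Integrable.of_bound hf.aestronglyMeasurable C
    (Eventually.of_forall fun a => by rw [Real.norm_eq_abs, abs_of_nonneg (h0 a)]; exact h a)

lemma fst_aux (μ : Measure Sq) [IsProbabilityMeasure μ] (D : Sq → ℝ) (hD : Measurable D)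
    (C : ℝ) (h0 : ∀ a, 0 ≤ D a) (h : ∀ a, D a ≤ C) :
    ∫ p : Sq, ∫ q, D (q.1, p.1) ∂μ = ∫ p, D p ∂((μ.map Prod.fst).prod volume) := by
  have : IsProbabilityMeasure (μ.map Prod.fst) :=
    Measure.isProbabilityMeasure_map measurable_fst.aemeasurable
  rw [integral_prod_symm _ (integrable_aux _ D hD C h0 h)]
  have h1 := integral_fun_fst (μ := (volume : Measure unitInterval))
    (ν := (volume : Measure unitInterval)) (fun v => ∫ q, D (q.1, v) ∂μ)
  rw [← Measure.volume_eq_prod] at h1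
  rw [h1]
  simp only [probReal_univ, one_smul]
  congr 1
  ext v
  rw [integral_map measurable_fst.aemeasurable]
  exact (hD.comp (by fun_prop : Measurable fun x : unitInterval => (x, v))).aestronglyMeasurable

lemma snd_aux (μ : Measure Sq) [IsProbabilityMeasure μ] (D : Sq → ℝ) (hD : Measurable D)
    (C : ℝ) (h0 : ∀ a, 0 ≤ D a) (h : ∀ a, D a ≤ C) :
    ∫ p : Sq, ∫ q, D (q.2, p.2) ∂μ = ∫ p, D p ∂((μ.map Prod.snd).prod volume) := by
  have : IsProbabilityMeasure (μ.map Prod.snd) :=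
    Measure.isProbabilityMeasure_map measurable_snd.aemeasurable
  rw [integral_prod_symm _ (integrable_aux _ D hD C h0 h)]
  have h1 := integral_fun_snd (μ := (volume : Measure unitInterval))
    (ν := (volume : Measure unitInterval)) (fun v => ∫ q, D (q.2, v) ∂μ)
  rw [← Measure.volume_eq_prod] at h1
  rw [h1]
  simp only [probReal_univ, one_smul]
  congr 1
  ext v
  rw [integral_map measurable_snd.aemeasurable]
  exact (hD.comp (by fun_prop : Measurable fun x : unitInterval => (x, v))).aestronglyMeasurable

/-- For an s-graphon `μ` and bounded Borel fairly distributed functions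
`g, h : [0,1]² → [0,C]`,
`‖φ(g,μ) − φ(h,μ)‖_{L¹(λ²)} ≤ C (‖g−h‖_{L¹(μ⁽²⁾×λ)} + ‖g−h‖_{L¹(μ⁽¹⁾×λ)})`,
where `μ⁽¹⁾, μ⁽²⁾` are the two marginals of `μ`. -/
theorem stmt11 (μ : Measure Sq) (hprob : IsProbabilityMeasure μ) (hsymm : IsSymmSq μ)
    (C : ℝ) (hC : 0 < C) (g h : Sq → ℝ) (hg : FairlyDistributed g) (hh : FairlyDistributed h)
    (hgC : ∀ p, g p ≤ C) (hhC : ∀ p, h p ≤ C) :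
    ∫ p, |phiFn g μ p - phiFn h μ p| ≤
      C * ((∫ p, |g p - h p| ∂((μ.map Prod.snd).prod volume)) +
           (∫ p, |g p - h p| ∂((μ.map Prod.fst).prod volume))) := by
  have hgm := hg.measurable
  have hhm := hh.measurable
  have hg0 := hg.nonneg
  have hh0 := hh.nonneg
  set D : Sq → ℝ := fun p => |g p - h p| with hDdef
  have hD : Measurable D := (hgm.sub hhm).abs
  have hD0 : ∀ p, 0 ≤ D p := fun p => abs_nonneg _
  have hDC : ∀ p, D p ≤ C := fun p => by
    simp only [hDdef]
    rw [abs_le]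
    constructor <;> linarith [hg0 p, hh0 p, hgC p, hhC p]
  rw [← fst_aux μ D hD C hD0 hDC, ← snd_aux μ D hD C hD0 hDC]
  have hI1 : Integrable (fun z : Sq × Sq => D (z.2.1, z.1.1)) (volume.prod μ) :=
    integrable_aux _ _ (hD.comp (by fun_prop)) C (fun _ => hD0 _) (fun _ => hDC _)
  have hI2 : Integrable (fun z : Sq × Sq => D (z.2.2, z.1.2)) (volume.prod μ) :=
    integrable_aux _ _ (hD.comp (by fun_prop)) C (fun _ => hD0 _) (fun _ => hDC _)
  have hJ1 : Integrable (fun p : Sq => ∫ q, D (q.1, p.1) ∂μ) := hI1.integral_prod_left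
  have hJ2 : Integrable (fun p : Sq => ∫ q, D (q.2, p.2) ∂μ) := hI2.integral_prod_left
  rw [← integral_add hJ2 hJ1, ← integral_const_mul]
  refine integral_mono_of_nonneg (Eventually.of_forall fun p => abs_nonneg _)
    ((hJ2.add hJ1).const_mul C) (Eventually.of_forall fun p => ?_)
  have hK1 : Integrable (fun q : Sq => D (q.1, p.1)) μ :=
    integrable_aux _ _ (hD.comp (by fun_prop)) C (fun _ => hD0 _) (fun _ => hDC _)
  have hK2 : Integrable (fun q : Sq => D (q.2, p.2)) μ :=
    integrable_aux _ _ (hD.comp (by fun_prop)) C (fun _ => hD0 _) (fun _ => hDC _)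
  have key : ∀ f : Sq → ℝ, Measurable f → (∀ p, 0 ≤ f p) → (∀ p, f p ≤ C) →
      Integrable (fun q : Sq => f (q.1, p.1) * f (q.2, p.2)) μ := fun f hf h0 h1 =>
    integrable_aux _ _ ((hf.comp (by fun_prop)).mul (hf.comp (by fun_prop))) (C * C)
      (fun _ => mul_nonneg (h0 _) (h0 _)) (fun _ => mul_le_mul (h1 _) (h1 _) (h0 _) hC.le)
  simp only [phiFn]
  rw [← integral_sub (key g hgm hg0 hgC) (key h hhm hh0 hhC), ← integral_add hK2 hK1,
    ← integral_const_mul]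
  refine abs_integral_le_integral_abs.trans ?_
  refine integral_mono_of_nonneg (Eventually.of_forall fun q => abs_nonneg _)
    ((hK2.add hK1).const_mul C) (Eventually.of_forall fun q => ?_)
  simp only [hDdef]
  have e : g (q.1, p.1) * g (q.2, p.2) - h (q.1, p.1) * h (q.2, p.2) =
      g (q.1, p.1) * (g (q.2, p.2) - h (q.2, p.2)) +
      h (q.2, p.2) * (g (q.1, p.1) - h (q.1, p.1)) := by ring
  rw [e]
  refine (abs_add_le _ _).trans ?_
  rw [abs_mul, abs_mul, abs_of_nonneg (hg0 _), abs_of_nonneg (hh0 _), mul_add]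
  exact add_le_add (mul_le_mul_of_nonneg_right (hgC _) (abs_nonneg _))
    (mul_le_mul_of_nonneg_right (hhC _) (abs_nonneg _))

end
end

section
/- Let μ be an s-graphon and let f ∈ FDC be a continuous fairly distributed function with C = sup f. Let ε > 0 and let k ∈ ℕ be such that |f(x,y) − f(x',y')| < ε whenever |x − x'| ≤ 1/k and |y − y'| ≤ 1/k. Let I_1,…,I_k be the intervals I_i = [(i−1)/k, i/k) for i < k and I_k = [(k−1)/k, 1], and define f_i(x) = k ∫_{(u,v) ∈ I_j × I_i} f(u,v) dλ²(u,v) for x ∈ I_j (i,j = 1,…,k), and M(i,j) = ∫_{[0,1]²} f_i(x) f_j(y) dμ(x,y). Then for all i,j = 1,…,k and all (u,v) ∈ I_i × I_j, |k²·M(i,j) − φ(f,μ)(u,v)| ≤ 2Cε. -/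
open MeasureTheory Topology Filter

noncomputable section

/-- Each grid interval is measurable. -/
lemma measurableSet_Ik (k : ℕ) (i : Fin k) : MeasurableSet (Ik k i) := by
  unfold Ik
  split_ifs
  · exact measurable_subtype_coe measurableSet_Icc
  · exact measurable_subtype_coe measurableSet_Ico

lemma Ik_bounds (k : ℕ) (hk : 0 < k) (i : Fin k) (x : unitInterval) (hx : x ∈ Ik k i) :
    ((i : ℕ) : ℝ) / k ≤ x ∧ (x : ℝ) ≤ (((i : ℕ) : ℝ) + 1) / k := by
  have hk' : (0 : ℝ) < k := by exact_mod_cast hk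
  unfold Ik at hx
  split_ifs at hx with h
  · refine ⟨hx.1, ?_⟩
    have : (((i : ℕ) : ℝ) + 1) = k := by exact_mod_cast h
    rw [this, div_self hk'.ne']
    exact x.2.2
  · exact ⟨hx.1, hx.2.le⟩

lemma Ik_dist (k : ℕ) (hk : 0 < k) (i : Fin k) (x y : unitInterval) (hx : x ∈ Ik k i)
    (hy : y ∈ Ik k i) : |(x : ℝ) - y| ≤ 1 / k := by
  have h1 := Ik_bounds k hk i x hx
  have h2 := Ik_bounds k hk i y hy
  rw [add_div] at h1 h2
  rw [abs_le]
  constructor <;> linarith [h1.1, h1.2, h2.1, h2.2]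

lemma volume_Ik (k : ℕ) (hk : 0 < k) (i : Fin k) : volume.real (Ik k i) = 1 / k := by
  have hk' : (0 : ℝ) < k := by exact_mod_cast hk
  have hi : (((i : ℕ) : ℝ) + 1) ≤ k := by exact_mod_cast i.2
  have h0 : (0 : ℝ) ≤ ((i : ℕ) : ℝ) / k := by positivity
  have h1 : (((i : ℕ) : ℝ) + 1) / k ≤ 1 := by rwa [div_le_one hk']
  rw [measureReal_def, unitInterval.volume_apply]
  unfold Ik
  split_ifs with h
  · have : (((i : ℕ) : ℝ) + 1) = k := by exact_mod_cast h
    rw [Subtype.image_preimage_coe, Set.inter_eq_right.2 (Set.Icc_subset_Icc_left h0),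
      Real.volume_Icc, ENNReal.toReal_ofReal]
    · rw [← this]; field_simp; ring
    · rw [sub_nonneg, div_le_one hk']; linarith
  · rw [Subtype.image_preimage_coe, Set.inter_eq_right.2, Real.volume_Ico,
      ENNReal.toReal_ofReal]
    · rw [add_div]; ring
    · rw [add_div]; ring_nf; positivity
    · exact fun z hz => ⟨h0.trans hz.1, hz.2.le.trans h1⟩

lemma mem_Ik_gridIdx (k : ℕ) (hk : 0 < k) (x : unitInterval) : x ∈ Ik k (gridIdx k hk x) := by
  have hk' : (0 : ℝ) < k := by exact_mod_cast hk
  have hx0 : 0 ≤ (x : ℝ) * k := mul_nonneg x.2.1 hk'.le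
  have hfl := Nat.floor_le hx0
  have hlt := Nat.lt_floor_add_one ((x : ℝ) * k)
  have hle : (gridIdx k hk x : ℕ) ≤ ⌊(x : ℝ) * k⌋₊ := min_le_left _ _
  have hle' : ((gridIdx k hk x : ℕ) : ℝ) / k ≤ x := by
    rw [div_le_iff₀ hk']
    exact le_trans (by exact_mod_cast hle) hfl
  unfold Ik
  split_ifs with h
  · exact ⟨hle', x.2.2⟩
  · refine ⟨hle', ?_⟩
    have : (gridIdx k hk x : ℕ) = ⌊(x : ℝ) * k⌋₊ := by
      simp only [gridIdx] at h ⊢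
      omega
    rw [this, lt_div_iff₀ hk']
    exact hlt

lemma measurable_gridIdx (k : ℕ) (hk : 0 < k) : Measurable (gridIdx k hk) := by
  have h : Measurable fun x : unitInterval => min ⌊(x : ℝ) * k⌋₊ (k - 1) :=
    ((Nat.measurable_floor.comp (measurable_subtype_coe.mul_const _)).min measurable_const)
  refine measurable_to_countable' fun i => ?_
  have : gridIdx k hk ⁻¹' {i}
      = (fun x : unitInterval => min ⌊(x : ℝ) * k⌋₊ (k - 1)) ⁻¹' {(i : ℕ)} := by
    ext x
    simp [gridIdx, Fin.ext_iff]
  rw [this]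
  exact h (measurableSet_singleton _)

/-- The rescaled step function approximates `f`, and is bounded by `C`. -/
lemma step_approx (f : Sq → ℝ) (hf : FairlyDistributed f) (hfc : Continuous f)
    (C : ℝ) (hC : ∀ p, f p ≤ C) (ε : ℝ) (k : ℕ) (hk : 0 < k)
    (hmod : ∀ x x' y y' : unitInterval, |(x : ℝ) - (x' : ℝ)| ≤ 1 / k →
      |(y : ℝ) - (y' : ℝ)| ≤ 1 / k → |f (x, y) - f (x', y')| < ε)
    (i : Fin k) (u : unitInterval) (hu : u ∈ Ik k i) (x : unitInterval) :
    |(k : ℝ) * (k * ∫ q in Ik k (gridIdx k hk x) ×ˢ Ik k i, f q) - f (x, u)| ≤ ε ∧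
    |(k : ℝ) * (k * ∫ q in Ik k (gridIdx k hk x) ×ˢ Ik k i, f q)| ≤ C := by
  have hk' : (0 : ℝ) < k := by exact_mod_cast hk
  set S : Set Sq := Ik k (gridIdx k hk x) ×ˢ Ik k i with hS
  have hSm : MeasurableSet S := (measurableSet_Ik _ _).prod (measurableSet_Ik _ _)
  have hvol : volume.real S = 1 / k * (1 / k) := by
    rw [hS, Measure.volume_eq_prod, measureReal_prod_prod, volume_Ik k hk, volume_Ik k hk]
  have hint : IntegrableOn f S := by
    have : Integrable f (volume : Measure Sq) :=
      hfc.integrable_of_hasCompactSupport (HasCompactSupport.of_compactSpace f)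
    exact this.integrableOn
  constructor
  · have h1 : ‖∫ q in S, (f q - f (x, u))‖ ≤ ε * volume.real S := by
      refine norm_setIntegral_le_of_norm_le_const (measure_lt_top _ _) ?_
      rintro ⟨a, b⟩ ⟨ha, hb⟩
      exact (hmod _ _ _ _ (Ik_dist k hk _ _ _ ha (mem_Ik_gridIdx k hk x))
        (Ik_dist k hk _ _ _ hb hu)).le
    rw [integral_sub hint (integrable_const _), setIntegral_const, hvol, smul_eq_mul,
      Real.norm_eq_abs] at h1
    have : (k : ℝ) * (k * ∫ q in S, f q) - f (x, u)
        = (k * k) * ((∫ q in S, f q) - 1 / k * (1 / k) * f (x, u)) := by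
      field_simp
    rw [this, abs_mul, abs_of_pos (mul_pos hk' hk')]
    calc _ ≤ (k * k : ℝ) * (ε * (1 / k * (1 / k))) := by gcongr
      _ = ε := by field_simp
  · have h1 : ‖∫ q in S, f q‖ ≤ C * volume.real S := by
      refine norm_setIntegral_le_of_norm_le_const (measure_lt_top _ _) ?_
      intro q _
      rw [Real.norm_eq_abs, abs_of_nonneg (hf.nonneg q)]
      exact hC q
    rw [hvol, Real.norm_eq_abs] at h1
    rw [← mul_assoc, abs_mul, abs_of_pos (mul_pos hk' hk')]
    calc _ ≤ (k * k : ℝ) * (C * (1 / k * (1 / k))) := by gcongr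
      _ = C := by field_simp

/-- Let `μ` be an s-graphon, `f` a continuous fairly distributed function
bounded by `C`, and `ε > 0`, `k ∈ ℕ` such that `f` oscillates by less than `ε` on squares of
side `1/k`. With `f_i(x) = k ∫_{I_j × I_i} f dλ²` for `x ∈ I_j` and
`M(i,j) = ∫ f_i(x) f_j(y) dμ(x,y)`, we have
`|k² M(i,j) − φ(f,μ)(u,v)| ≤ 2Cε` for all `(u,v) ∈ I_i × I_j`. -/
theorem stmt13 (μ : SGraphon) (f : Sq → ℝ) (hf : FairlyDistributed f) (hfc : Continuous f)
    (C : ℝ) (hC : ∀ p, f p ≤ C) (ε : ℝ) (hε : 0 < ε) (k : ℕ) (hk : 0 < k)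
    (hmod : ∀ x x' y y' : unitInterval, |(x : ℝ) - (x' : ℝ)| ≤ 1 / k →
      |(y : ℝ) - (y' : ℝ)| ≤ 1 / k → |f (x, y) - f (x', y')| < ε) :
    ∀ i j : Fin k, ∀ u ∈ Ik k i, ∀ v ∈ Ik k j,
      |(k : ℝ) ^ 2 *
          (∫ p, ((k : ℝ) * ∫ q in Ik k (gridIdx k hk p.1) ×ˢ Ik k i, f q) *
            ((k : ℝ) * ∫ q in Ik k (gridIdx k hk p.2) ×ˢ Ik k j, f q) ∂μ.toMeasure) -
        phiFn f μ.toMeasure (u, v)| ≤ 2 * C * ε := by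
  intro i j u hu v hv
  have hC0 : 0 ≤ C := (hf.nonneg (0, 0)).trans (hC _)
  have : IsProbabilityMeasure μ.toMeasure := by
    unfold SGraphon.toMeasure; infer_instance
  have hA := step_approx f hf hfc C hC ε k hk hmod i u hu
  have hB := step_approx f hf hfc C hC ε k hk hmod j v hv
  set a : unitInterval → ℝ := fun x =>
    (k : ℝ) * (k * ∫ q in Ik k (gridIdx k hk x) ×ˢ Ik k i, f q) with ha
  set b : unitInterval → ℝ := fun x =>
    (k : ℝ) * (k * ∫ q in Ik k (gridIdx k hk x) ×ˢ Ik k j, f q) with hb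
  have ham : Measurable a :=
    (measurable_of_finite (fun g : Fin k =>
      (k : ℝ) * (k * ∫ q in Ik k g ×ˢ Ik k i, f q))).comp (measurable_gridIdx k hk)
  have hbm : Measurable b :=
    (measurable_of_finite (fun g : Fin k =>
      (k : ℝ) * (k * ∫ q in Ik k g ×ˢ Ik k j, f q))).comp (measurable_gridIdx k hk)
  have hint1 : Integrable (fun p : Sq => a p.1 * b p.2) μ.toMeasure := by
    refine Integrable.of_bound
      ((ham.comp measurable_fst).mul (hbm.comp measurable_snd)).aestronglyMeasurable (C * C)
      (ae_of_all _ fun p => ?_)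
    rw [Real.norm_eq_abs, abs_mul]
    exact mul_le_mul (hA p.1).2 (hB p.2).2 (abs_nonneg _) hC0
  have hint2 : Integrable (fun p : Sq => f (p.1, u) * f (p.2, v)) μ.toMeasure := by
    have hc : Continuous fun p : Sq => f (p.1, u) * f (p.2, v) := by fun_prop
    refine Integrable.of_bound hc.measurable.aestronglyMeasurable (C * C)
      (ae_of_all _ fun p => ?_)
    rw [Real.norm_eq_abs, abs_mul, abs_of_nonneg (hf.nonneg _), abs_of_nonneg (hf.nonneg _)]
    exact mul_le_mul (hC _) (hC _) (hf.nonneg _) hC0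
  have hEq : (k : ℝ) ^ 2 *
          (∫ p, ((k : ℝ) * ∫ q in Ik k (gridIdx k hk p.1) ×ˢ Ik k i, f q) *
            ((k : ℝ) * ∫ q in Ik k (gridIdx k hk p.2) ×ˢ Ik k j, f q) ∂μ.toMeasure)
      = ∫ p, a p.1 * b p.2 ∂μ.toMeasure := by
    rw [← integral_const_mul]
    refine integral_congr_ae (ae_of_all _ fun p => ?_)
    simp only [ha, hb]
    ring
  replace hA : ∀ x, |a x - f (x, u)| ≤ ε ∧ |a x| ≤ C := hA
  replace hB : ∀ x, |b x - f (x, v)| ≤ ε ∧ |b x| ≤ C := hB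
  rw [hEq]
  clear_value a b
  rw [phiFn, ← integral_sub hint1 hint2, ← Real.norm_eq_abs]
  refine (norm_integral_le_of_norm_le_const (C := 2 * C * ε) (ae_of_all _ fun p => ?_)).trans ?_
  · rw [Real.norm_eq_abs]
    have e : a p.1 * b p.2 - f (p.1, u) * f (p.2, v)
        = a p.1 * (b p.2 - f (p.2, v)) + (a p.1 - f (p.1, u)) * f (p.2, v) := by ring
    rw [e]
    refine (abs_add_le _ _).trans ?_
    rw [abs_mul, abs_mul, abs_of_nonneg (hf.nonneg (p.2, v))]
    have h1 := mul_le_mul (hA p.1).2 (hB p.2).1 (abs_nonneg _) hC0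
    have h2 := mul_le_mul (hA p.1).1 (hC (p.2, v)) (hf.nonneg _) hε.le
    linarith
  · simp

end
end

section
/- Every sequence {ν_n} of s-graphons has a subsequence {ν_{n_j}} and an s-graphon ν such that, for every k ∈ ℕ, the k-shapes C(ν_{n_j}, k) converge to C(ν,k) in the Vietoris topology on the hyperspace of compact subsets of ℝ^{k×k}; equivalently, the topology on isomorphism classes of s-graphons induced by the maps [ν] ↦ C(ν,k), k ∈ ℕ, is compact. -/
open MeasureTheory Topology Filter

noncomputable section

theorem exists_null_uncountable : ∃ Z : Set unitInterval, MeasurableSet Z ∧ volume Z = 0 ∧ ¬ Z.Countable := by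
  refine ⟨Subtype.val ⁻¹' {x : ℝ | Liouville x}, ?_, ?_, ?_⟩
  · apply measurable_subtype_coe
    rw [setOfPred_liouville_eq_iInter_iUnion]
    refine MeasurableSet.iInter fun n => MeasurableSet.iUnion fun a => MeasurableSet.iUnion fun b => MeasurableSet.iUnion fun _ => ?_
    exact Metric.isOpen_ball.measurableSet.diff (measurableSet_singleton _)
  · have h := unitInterval.measurePreserving_coe.quasiMeasurePreserving.preimage_null (s := {x : ℝ | Liouville x})
    apply h
    exact
      le_antisymm ((Measure.restrict_apply_le _ _).trans volume_setOfPred_liouville.le) zero_le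
  · intro hc
    have h1 : (Subtype.val '' (Subtype.val ⁻¹' {x : ℝ | Liouville x} : Set unitInterval)).Countable := hc.image _
    have h2 : (Subtype.val '' (Subtype.val ⁻¹' {x : ℝ | Liouville x} : Set unitInterval))ᶜ ∈ residual ℝ := by
      rw [mem_residual]
      refine ⟨_, subset_rfl, ?_, ?_⟩
      · exact h1.isGδ_compl
      · exact h1.dense_compl ℝ
    have h3 := dense_of_mem_residual (inter_mem eventually_residual_liouville h2)
    obtain ⟨x, hx, hx1⟩ := h3.exists_mem_open isOpen_Ioo (⟨1/2, by norm_num⟩ : (Set.Ioo (0:ℝ) 1).Nonempty)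
    exact hx.2 ⟨⟨x, hx1.1.le, hx1.2.le⟩, hx.1, rfl⟩

theorem cdf_continuous (m : Measure ℝ) [IsProbabilityMeasure m] [NullSingletonClass m] :
    Continuous (ProbabilityTheory.cdf m) := by
  rw [continuous_iff_continuousAt]
  intro x
  have hs := (ProbabilityTheory.cdf m).measure_singleton x
  rw [ProbabilityTheory.measure_cdf, measure_singleton] at hs
  have hle : ProbabilityTheory.cdf m x ≤ Function.leftLim (ProbabilityTheory.cdf m) x := by
    have := (ENNReal.ofReal_eq_zero).1 hs.symm
    linarith
  rw [continuousAt_iff_continuous_left'_right']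
  refine ⟨?_, ((ProbabilityTheory.cdf m).right_continuous x).mono Set.Ioi_subset_Ici_self⟩
  rw [(ProbabilityTheory.cdf m).mono.continuousWithinAt_Iio_iff_leftLim_eq]
  exact le_antisymm ((ProbabilityTheory.cdf m).mono.leftLim_le le_rfl) hle

theorem map_cdf (m : Measure ℝ) [IsProbabilityMeasure m] [NullSingletonClass m] (G : ℝ → unitInterval)
    (hG : ∀ x, (G x : ℝ) = ProbabilityTheory.cdf m x) (hGm : Measurable G) : m.map G = volume := by
  have := Measure.isProbabilityMeasure_map (μ := m) hGm.aemeasurable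
  have ivt : ∀ b : ℝ, 0 < b → b < 1 → ∃ s, ProbabilityTheory.cdf m s = b := by
    intro b h0 h1
    refine mem_range_of_exists_le_of_exists_ge (cdf_continuous m) ?_ ?_
    · exact (((ProbabilityTheory.tendsto_cdf_atBot m).eventually (gt_mem_nhds h0)).exists).imp fun _ h => h.le
    · exact (((ProbabilityTheory.tendsto_cdf_atTop m).eventually (lt_mem_nhds h1)).exists).imp fun _ h => h.le
  have up : ∀ b : ℝ, 0 < b → m {x | ProbabilityTheory.cdf m x < b} ≤ ENNReal.ofReal b := by
    intro b h0
    rcases lt_or_ge b 1 with h1 | h1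
    · obtain ⟨s, hs⟩ := ivt b h0 h1
      rw [← hs, ProbabilityTheory.ofReal_cdf]
      apply measure_mono
      intro x hx
      by_contra hxs
      exact absurd ((ProbabilityTheory.cdf m).mono (not_le.1 hxs).le) (not_le.2 hx)
    · exact prob_le_one.trans (by simpa using h1)
  refine Measure.ext_of_Iic _ _ fun a => ?_
  rw [Measure.map_apply hGm measurableSet_Iic, unitInterval.volume_Iic]
  have hpre : G ⁻¹' Set.Iic a = {x | ProbabilityTheory.cdf m x ≤ a} := by
    ext x; simp [← hG]
  rw [hpre]
  apply le_antisymm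
  · apply le_of_forall_gt_imp_ge_of_dense
    intro c hc
    rcases eq_or_ne c ⊤ with rfl | hct
    · exact le_top
    have hc' : (a : ℝ) < c.toReal := (ENNReal.ofReal_lt_iff_lt_toReal a.2.1 hct).1 hc
    calc _ ≤ m {x | ProbabilityTheory.cdf m x < c.toReal} := measure_mono fun x hx => lt_of_le_of_lt hx hc'
      _ ≤ ENNReal.ofReal c.toReal := up _ (a.2.1.trans_lt hc')
      _ = c := ENNReal.ofReal_toReal hct
  · rcases a.2.1.eq_or_lt with h0 | h0
    · simp [← h0]
    rcases a.2.2.eq_or_lt with h1 | h1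
    · have : {x | ProbabilityTheory.cdf m x ≤ a} = Set.univ := by
        ext x; simp [h1, ProbabilityTheory.cdf_le_one]
      rw [this, h1]; simp
    · obtain ⟨s, hs⟩ := ivt a h0 h1
      rw [← hs, ProbabilityTheory.ofReal_cdf, hs]
      exact measure_mono fun x hx => ((ProbabilityTheory.cdf m).mono hx).trans hs.le

theorem exists_embed_real (m : Measure ℝ) [IsProbabilityMeasure m] [NullSingletonClass m] :
    ∃ T : ℝ → unitInterval, MeasurableEmbedding T ∧ m.map T = volume := by
  classical
  obtain ⟨Z, hZm, hZ0, hZc⟩ := exists_null_uncountable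
  let G : ℝ → unitInterval := fun x => ⟨ProbabilityTheory.cdf m x, ProbabilityTheory.cdf_nonneg m x, ProbabilityTheory.cdf_le_one m x⟩
  have hGmono : Monotone G := fun x y h => (ProbabilityTheory.cdf m).mono h
  have hGm : Measurable G := hGmono.measurable
  have hmap := map_cdf m G (fun _ => rfl) hGm
  let D : Set unitInterval := Set.range fun q : ℚ => G q
  have hD : D.Countable := Set.countable_range _
  let W : Set unitInterval := Z ∪ D
  have hW : MeasurableSet W := hZm.union hD.measurableSet
  have hW0 : volume W = 0 := measure_union_null hZ0 (hD.measure_zero _)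
  have hWc : ¬ W.Countable := fun h => hZc (h.mono Set.subset_union_left)
  have : StandardBorelSpace W := hW.standardBorel
  let e : ℝ ≃ᵐ W := PolishSpace.measurableEquivOfNotCountable
    (by rw [← Set.countable_univ_iff]; exact Cardinal.not_countable_real) 
    (by rwa [Set.countable_coe_iff])
  let T : ℝ → unitInterval := fun x => if G x ∈ W then (e x : unitInterval) else G x
  have hTm : Measurable T := Measurable.ite (hGm hW) (measurable_subtype_coe.comp e.measurable) hGm
  have hTi : Function.Injective T := by
    have key : ∀ x y, x < y → T x = T y → False := by
      intro x y hxy h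
      by_cases hx : G x ∈ W <;> by_cases hy : G y ∈ W <;> simp only [T, hx, hy, if_true, if_false] at h
      · exact hxy.ne (e.injective (Subtype.ext h))
      · exact hy (h ▸ (e x).2)
      · exact hx (h ▸ (e y).2)
      · obtain ⟨q, h1, h2⟩ := exists_rat_btwn hxy
        apply hx
        right
        refine ⟨q, le_antisymm ?_ (hGmono h1.le)⟩
        rw [h]; exact hGmono h2.le
    intro x y h
    rcases lt_trichotomy x y with h1 | h1 | h1
    · exact (key _ _ h1 h).elim
    · exact h1
    · exact (key _ _ h1 h.symm).elim
  refine ⟨T, hTm.measurableEmbedding hTi, ?_⟩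
  rw [← hmap]
  apply Measure.map_congr
  have : m (G ⁻¹' W) = 0 := by rw [← Measure.map_apply hGm hW, hmap, hW0]
  filter_upwards [measure_eq_zero_iff_ae_notMem.1 this] with x hx
  have hx' : G x ∉ W := hx
  simp [T, hx']

theorem exists_embed {X : Type*} [MeasurableSpace X] [StandardBorelSpace X] [Nonempty X] (m : Measure X)
    [IsProbabilityMeasure m] [NullSingletonClass m] :
    ∃ (T : X → unitInterval) (S : unitInterval → X), Measurable T ∧ Measurable S ∧ (∀ x, S (T x) = x) ∧ m.map T = volume := by
  have he := measurableEmbedding_embeddingReal X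
  have := Measure.isProbabilityMeasure_map (μ := m) he.measurable.aemeasurable
  have : NullSingletonClass (m.map (embeddingReal X)) := by
    constructor
    intro x
    rw [he.map_apply]
    refine Set.Subsingleton.measure_zero ?_ _
    exact Set.subsingleton_singleton.preimage he.injective
  obtain ⟨T, hT, hTm⟩ := exists_embed_real (m.map (embeddingReal X))
  have hc := hT.comp he
  refine ⟨_, hc.invFun, hc.measurable, hc.measurable_invFun, hc.leftInverse_invFun, ?_⟩
  rw [← hTm, Measure.map_map hT.measurable he.measurable]

/-- simplex valued measurable maps -/
def IsSP {X : Type*} [MeasurableSpace X] (k : ℕ) (f : Fin k → X → ℝ) : Prop :=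
  (∀ i, Measurable (f i)) ∧ (∀ i x, 0 ≤ f i x) ∧ (∀ x, ∑ i, f i x = 1)

theorem IsSP.le_one {X : Type*} [MeasurableSpace X] {k : ℕ} {f : Fin k → X → ℝ} (h : IsSP k f) (i : Fin k) (x : X) :
    f i x ≤ 1 := by
  rw [← h.2.2 x]
  exact Finset.single_le_sum (f := fun i => f i x) (fun j _ => h.2.1 j x) (Finset.mem_univ i)

theorem integrable_of_bdd {X : Type*} [MeasurableSpace X] (m : Measure X) [IsFiniteMeasure m] {f : X → ℝ}
    (hf : Measurable f) (h0 : ∀ x, 0 ≤ f x) (h1 : ∀ x, f x ≤ 1) : Integrable f m := by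
  refine Integrable.of_bound hf.aestronglyMeasurable 1 (Eventually.of_forall fun x => ?_)
  rw [Real.norm_eq_abs, abs_of_nonneg (h0 x)]; exact h1 x

theorem IsSP.integrable {X : Type*} [MeasurableSpace X] {k : ℕ} {f : Fin k → X → ℝ} (h : IsSP k f) (i : Fin k)
    (m : Measure X) [IsFiniteMeasure m] : Integrable (f i) m :=
  integrable_of_bdd m (h.1 i) (h.2.1 i) (h.le_one i)

theorem IsSP.measurable_mul {X : Type*} [MeasurableSpace X] {k : ℕ} {f : Fin k → X → ℝ} (h : IsSP k f) (i j : Fin k) :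
    Measurable (fun p : X × X => f i p.1 * f j p.2) :=
  ((h.1 i).comp measurable_fst).mul ((h.1 j).comp measurable_snd)

theorem IsSP.integrable_mul {X : Type*} [MeasurableSpace X] {k : ℕ} {f : Fin k → X → ℝ} (h : IsSP k f) (i j : Fin k)
    (μ : Measure (X × X)) [IsFiniteMeasure μ] : Integrable (fun p : X × X => f i p.1 * f j p.2) μ :=
  integrable_of_bdd μ (h.measurable_mul i j) (fun _ => mul_nonneg (h.2.1 i _) (h.2.1 j _))
    (fun _ => mul_le_one₀ (h.le_one i _) (h.2.1 j _) (h.le_one j _))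

theorem correct_partition {k : ℕ} (hk : 0 < k) (U : Set (Matrix (Fin k) (Fin k) ℝ)) (hU : IsOpen U)
    (M : Matrix (Fin k) (Fin k) ℝ) (hM : M ∈ U) :
    ∃ δ > 0, ∀ (μ : Measure Sq) [IsProbabilityMeasure μ] (p : Fin k → unitInterval → ℝ), IsSP k p →
      (∀ i, |(∫ x, p i x) - 1 / (k : ℝ)| < δ) → (∀ i j, |(∫ q, p i q.1 * p j q.2 ∂μ) - M i j| < δ) →
      ∃ N ∈ U, ∃ f : Fin k → unitInterval → ℝ, IsFracPartition k f ∧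
        ∀ i j, N i j = ∫ q, f i q.1 * f j q.2 ∂μ := by
  have : ∃ ε > 0, ∀ N : Matrix (Fin k) (Fin k) ℝ, (∀ i j, |N i j - M i j| < ε) → N ∈ U := by
    let U' : Set (Fin k → Fin k → ℝ) := U
    have hU' : IsOpen U' := hU
    obtain ⟨ε, hε, h⟩ := Metric.isOpen_iff.1 hU' M hM
    refine ⟨ε, hε, fun N hN => h ?_⟩
    refine (dist_pi_lt_iff (f := (N : Fin k → Fin k → ℝ)) (g := M) hε).2 ?_
    intro i
    refine (dist_pi_lt_iff hε).2 fun j => ?_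
    rw [Real.dist_eq]; exact hN i j
  obtain ⟨ε, hε, hεU⟩ := this
  have hk' : (0:ℝ) < k := by exact_mod_cast hk
  refine ⟨ε / (2 * k + 5), by positivity, ?_⟩
  intro μ _ p hp ha hpM
  set δ := ε / (2 * k + 5) with hδ
  have hδ0 : 0 < δ := by positivity
  have hεδ : ε = (2 * k + 5) * δ := by rw [hδ]; field_simp
  set a : Fin k → ℝ := fun i => ∫ x, p i x with hadef
  have ha' : ∀ i, |a i - 1 / k| < δ := fun i => ha i
  have hsum : ∑ i, a i = 1 := by
    rw [hadef, ← integral_finsetSum _ (fun i _ => hp.integrable i _)]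
    simp [hp.2.2]
  have hD : 0 < 1 + k * δ := by positivity
  let f : Fin k → unitInterval → ℝ := fun i x => (p i x + (1 / k + δ - a i)) / (1 + k * δ)
  have hf : IsSP k f := by
    refine ⟨fun i => ((hp.1 i).add_const _).div_const _, fun i x => ?_, fun x => ?_⟩
    · have := (abs_lt.1 (ha' i)).2
      have := hp.2.1 i x
      exact div_nonneg (by linarith) hD.le
    · simp only [f]
      rw [← Finset.sum_div, Finset.sum_add_distrib, Finset.sum_sub_distrib, hp.2.2, hsum]
      simp
      field_simp
  have hfp : ∀ i x, |f i x - p i x| ≤ (k + 2) * δ := by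
    intro i x
    have h1 := abs_lt.1 (ha' i)
    have h2 := hp.2.1 i x
    have h3 := hp.le_one i x
    have : f i x - p i x = ((1 / k + δ - a i) - k * δ * p i x) / (1 + k * δ) := by
      simp only [f]; field_simp; ring
    rw [this, abs_div, abs_of_pos hD, div_le_iff₀ hD]
    have h4 : k * δ * p i x ≤ k * δ := mul_le_of_le_one_right (by positivity) h3
    have h5 : 0 ≤ k * δ * p i x := by positivity
    have h6 : (0:ℝ) ≤ (k + 2) * δ * (k * δ) := by positivity
    rw [abs_le]
    constructor <;> nlinarith
  refine ⟨fun i j => ∫ q, f i q.1 * f j q.2 ∂μ, hεU _ fun i j => ?_, f, ⟨hf.1, hf.2.1, hf.2.2, fun i => ?_⟩, fun i j => rfl⟩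
  · have e1 : |(∫ q, f i q.1 * f j q.2 ∂μ) - ∫ q, p i q.1 * p j q.2 ∂μ| ≤ 2 * ((k + 2) * δ) := by
      rw [← integral_sub (hf.integrable_mul i j μ) (hp.integrable_mul i j μ)]
      have := norm_integral_le_of_norm_le_const (μ := μ) (f := fun q => f i q.1 * f j q.2 - p i q.1 * p j q.2)
        (C := 2 * ((k + 2) * δ)) (Eventually.of_forall fun q => ?_)
      · simpa using this
      · rw [Real.norm_eq_abs]
        have : f i q.1 * f j q.2 - p i q.1 * p j q.2 = (f i q.1 - p i q.1) * f j q.2 + p i q.1 * (f j q.2 - p j q.2) := by ring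
        rw [this]
        refine (abs_add_le _ _).trans ?_
        rw [abs_mul, abs_mul, abs_of_nonneg (hf.2.1 j _), abs_of_nonneg (hp.2.1 i _)]
        have h1 := hfp i q.1
        have h2 := hfp j q.2
        have h3 : |f i q.1 - p i q.1| * f j q.2 ≤ |f i q.1 - p i q.1| := mul_le_of_le_one_right (abs_nonneg _) (hf.le_one _ _)
        have h4 : p i q.1 * |f j q.2 - p j q.2| ≤ |f j q.2 - p j q.2| := mul_le_of_le_one_left (abs_nonneg _) (hp.le_one _ _)
        linarith
    have e2 : |(∫ q, p i q.1 * p j q.2 ∂μ) - M i j| < δ := hpM i j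
    have := abs_sub_le (∫ q, f i q.1 * f j q.2 ∂μ) (∫ q, p i q.1 * p j q.2 ∂μ) (M i j)
    show |(∫ q, f i q.1 * f j q.2 ∂μ) - M i j| < ε
    rw [hεδ]
    linarith
  · simp only [f]
    rw [integral_div, integral_add (hp.integrable i _) (integrable_const _), integral_const]
    simp only [probReal_univ, one_smul]
    change (a i + (1 / k + δ - a i)) / (1 + k * δ) = _
    field_simp
    ring

/-- retraction onto the simplex -/
def retr {k : ℕ} (i : Fin k) (v : Fin k → ℝ) : ℝ :=
  max (v i) 0 / max (∑ j, max (v j) 0) 1 + (1 - (∑ j, max (v j) 0) / max (∑ j, max (v j) 0) 1) / k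

theorem retr_continuous {k : ℕ} (i : Fin k) : Continuous (retr i) := by
  unfold retr
  have : ∀ v : Fin k → ℝ, max (∑ j, max (v j) 0) 1 ≠ 0 := fun v => (lt_of_lt_of_le one_pos (le_max_right _ _)).ne'
  fun_prop (disch := exact this)

theorem retr_nonneg {k : ℕ} (i : Fin k) (v : Fin k → ℝ) : 0 ≤ retr i v := by
  unfold retr
  have h : 0 < max (∑ j, max (v j) 0) 1 := lt_of_lt_of_le one_pos (le_max_right _ _)
  have : (∑ j, max (v j) 0) / max (∑ j, max (v j) 0) 1 ≤ 1 := by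
    rw [div_le_one h]; exact le_max_left _ _
  have h2 : 0 ≤ 1 - (∑ j, max (v j) 0) / max (∑ j, max (v j) 0) 1 := by linarith
  have h3 : 0 ≤ max (v i) 0 := le_max_right _ _
  positivity

theorem retr_sum {k : ℕ} (hk : 0 < k) (v : Fin k → ℝ) : ∑ i, retr i v = 1 := by
  unfold retr
  have hk' : (k:ℝ) ≠ 0 := by exact_mod_cast hk.ne'
  rw [Finset.sum_add_distrib, ← Finset.sum_div]
  simp
  field_simp
  ring

theorem retr_eq {k : ℕ} (i : Fin k) (v : Fin k → ℝ) (h0 : ∀ i, 0 ≤ v i) (h1 : ∑ i, v i = 1) : retr i v = v i := by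
  unfold retr
  simp [h0, h1]

theorem exists_cont_approx {X : Type*} [TopologicalSpace X] [CompactSpace X] [TopologicalSpace.MetrizableSpace X]
    [MeasurableSpace X] [BorelSpace X] {k : ℕ} (hk : 0 < k) (m : Measure X) [IsProbabilityMeasure m]
    (μ : Measure (X × X)) [IsProbabilityMeasure μ] (g : Fin k → X → ℝ) (hg : IsSP k g) :
    ∃ h : ℕ → Fin k → X → ℝ, (∀ n, IsSP k (h n)) ∧ (∀ n i, Continuous (h n i)) ∧
      (∀ i, Tendsto (fun n => ∫ x, h n i x ∂m) atTop (𝓝 (∫ x, g i x ∂m))) ∧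
      (∀ i j, Tendsto (fun n => ∫ q, h n i q.1 * h n j q.2 ∂μ) atTop (𝓝 (∫ q, g i q.1 * g j q.2 ∂μ))) := by
  let M : Measure X := m + μ.map Prod.fst + μ.map Prod.snd
  have : IsFiniteMeasure M := by
    have := Measure.isProbabilityMeasure_map (μ := μ) (measurable_fst (α := X) (β := X)).aemeasurable
    have := Measure.isProbabilityMeasure_map (μ := μ) (measurable_snd (α := X) (β := X)).aemeasurable
    infer_instance
  let G : X → Fin k → ℝ := fun x i => g i x
  have hGmeas : Measurable G := measurable_pi_lambda _ hg.1
  have hG : MemLp G 1 M := by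
    refine MemLp.of_bound hGmeas.aestronglyMeasurable 1 (Eventually.of_forall fun x => ?_)
    rw [pi_norm_le_iff_of_nonneg zero_le_one]
    intro i
    rw [Real.norm_eq_abs, abs_of_nonneg (hg.2.1 i x)]; exact hg.le_one i x
  have := fun n : ℕ => hG.exists_boundedContinuous_eLpNorm_sub_le ENNReal.one_ne_top
    (ε := ((n : ENNReal) + 1)⁻¹) (by simp)
  choose c hc hcm using this
  have htm : TendstoInMeasure M (fun n => (c n : X → Fin k → ℝ)) atTop G := by
    refine tendstoInMeasure_of_tendsto_eLpNorm one_ne_zero (fun n => (c n).continuous.aestronglyMeasurable)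
      hGmeas.aestronglyMeasurable ?_
    have ht : Tendsto (fun n : ℕ => ((n : ENNReal) + 1)⁻¹) atTop (𝓝 0) := by
      have := (tendsto_add_atTop_iff_nat 1).2 ENNReal.tendsto_inv_nat_nhds_zero
      simpa using this
    refine tendsto_of_tendsto_of_tendsto_of_le_of_le tendsto_const_nhds ht (fun n => zero_le) (fun n => ?_)
    simp only
    rw [eLpNorm_sub_comm]; exact hc n
  obtain ⟨ns, -, hns⟩ := htm.exists_seq_tendsto_ae
  have hsp : ∀ n, IsSP k (fun i x => retr i (c (ns n) x)) := fun n =>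
    ⟨fun i => ((retr_continuous i).comp (c (ns n)).continuous).measurable, fun i x => retr_nonneg _ _, fun x => retr_sum hk _⟩
  have hlim : ∀ᵐ x ∂M, ∀ i, Tendsto (fun n => retr i (c (ns n) x)) atTop (𝓝 (g i x)) := by
    filter_upwards [hns] with x hx i
    have := ((retr_continuous i).tendsto _).comp hx
    rwa [retr_eq i (G x) (fun i => hg.2.1 i x) (hg.2.2 x)] at this
  have hlim' := hlim
  rw [ae_add_measure_iff, ae_add_measure_iff] at hlim'
  obtain ⟨⟨h1, h2⟩, h3⟩ := hlim'
  have h2' := ae_of_ae_map measurable_fst.aemeasurable h2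
  have h3' := ae_of_ae_map measurable_snd.aemeasurable h3
  refine ⟨fun n i x => retr i (c (ns n) x), hsp, fun n i => (retr_continuous i).comp (c (ns n)).continuous, ?_, ?_⟩
  · intro i
    refine tendsto_integral_of_dominated_convergence (fun _ => 1) (fun n => ((hsp n).1 i).aestronglyMeasurable)
      (integrable_const _) (fun n => Eventually.of_forall fun x => ?_) ?_
    · rw [Real.norm_eq_abs, abs_of_nonneg ((hsp n).2.1 i x)]; exact (hsp n).le_one i x
    · filter_upwards [h1] with x hx using hx i
  · intro i j
    refine tendsto_integral_of_dominated_convergence (fun _ => 1) (fun n => ((hsp n).measurable_mul i j).aestronglyMeasurable)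
      (integrable_const _) (fun n => Eventually.of_forall fun x => ?_) ?_
    · rw [Real.norm_eq_abs, abs_of_nonneg (mul_nonneg ((hsp n).2.1 i _) ((hsp n).2.1 j _))]
      exact mul_le_one₀ ((hsp n).le_one i _) ((hsp n).2.1 j _) ((hsp n).le_one j _)
    · filter_upwards [h2', h3'] with x hx hy using (hx i).mul (hy j)

theorem exists_weak_subseq {X : Type*} [TopologicalSpace X] [CompactSpace X] [TopologicalSpace.MetrizableSpace X]
    [MeasurableSpace X] [BorelSpace X] (ν : ℕ → Measure Sq) (hν : ∀ n, IsProbabilityMeasure (ν n))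
    (hsymm : ∀ n, IsSymmSq (ν n)) (F : ℕ → unitInterval → X) (hF : ∀ n, Measurable (F n)) :
    ∃ φ : ℕ → ℕ, StrictMono φ ∧ ∃ (m : Measure X) (μ : Measure (X × X)), IsProbabilityMeasure m ∧
      IsProbabilityMeasure μ ∧ μ.map Prod.swap = μ ∧
      (∀ h : X → ℝ, Continuous h → Tendsto (fun n => ∫ x, h (F (φ n) x)) atTop (𝓝 (∫ x, h x ∂m))) ∧
      (∀ h : X × X → ℝ, Continuous h →
        Tendsto (fun n => ∫ q, h (F (φ n) q.1, F (φ n) q.2) ∂(ν (φ n))) atTop (𝓝 (∫ q, h q ∂μ))) := by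
  have hFF : ∀ n, Measurable (fun q : Sq => (F n q.1, F n q.2)) := fun n =>
    ((hF n).comp measurable_fst).prodMk ((hF n).comp measurable_snd)
  let a : ℕ → ProbabilityMeasure X := fun n => ⟨volume.map (F n), Measure.isProbabilityMeasure_map (hF n).aemeasurable⟩
  let b : ℕ → ProbabilityMeasure (X × X) := fun n => ⟨(ν n).map (fun q : Sq => (F n q.1, F n q.2)),
    have := hν n; Measure.isProbabilityMeasure_map (hFF n).aemeasurable⟩
  obtain ⟨⟨m, μ⟩, φ, hφ, hlim⟩ := CompactSpace.tendsto_subseq (fun n => (a n, b n))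
  have hm : Tendsto (fun n => a (φ n)) atTop (𝓝 m) := (continuous_fst.tendsto _).comp hlim
  have hμ : Tendsto (fun n => b (φ n)) atTop (𝓝 μ) := (continuous_snd.tendsto _).comp hlim
  refine ⟨φ, hφ, m, μ, inferInstance, inferInstance, ?_, ?_, ?_⟩
  · have h1 := ((ProbabilityMeasure.continuous_map (continuous_swap (X := X) (Y := X))).tendsto μ).comp hμ
    have h2 : ∀ n, (b n).map (continuous_swap (X := X) (Y := X)).measurable.aemeasurable = b n := by
      intro n
      apply Subtype.ext
      change ((ν n).map _).map Prod.swap = (ν n).map _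
      rw [Measure.map_map measurable_swap (hFF n)]
      conv_rhs => rw [← hsymm n, Measure.map_map (hFF n) measurable_swap]
      rfl
    have h3 : Tendsto (fun n => b (φ n)) atTop (𝓝 (μ.map (continuous_swap (X := X) (Y := X)).measurable.aemeasurable)) := by
      refine h1.congr fun n => ?_
      exact h2 (φ n)
    have h4 := tendsto_nhds_unique hμ h3
    exact (congrArg Subtype.val h4).symm
  · intro h hc
    rw [ProbabilityMeasure.tendsto_iff_forall_integral_tendsto] at hm
    refine (hm (BoundedContinuousFunction.mkOfCompact ⟨h, hc⟩)).congr fun n => ?_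
    change ∫ x, h x ∂(volume.map (F (φ n))) = _
    rw [integral_map (hF _).aemeasurable hc.aestronglyMeasurable]
  · intro h hc
    rw [ProbabilityMeasure.tendsto_iff_forall_integral_tendsto] at hμ
    refine (hμ (BoundedContinuousFunction.mkOfCompact ⟨h, hc⟩)).congr fun n => ?_
    change ∫ x, h x ∂((ν (φ n)).map _) = _
    rw [integral_map (hFF _).aemeasurable hc.aestronglyMeasurable]

theorem lower_vietoris {X : Type*} [TopologicalSpace X] [CompactSpace X] [TopologicalSpace.MetrizableSpace X]
    [MeasurableSpace X] [BorelSpace X] (ν : ℕ → Measure Sq) (hν : ∀ n, IsProbabilityMeasure (ν n))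
    (F : ℕ → unitInterval → X) (hF : ∀ n, Measurable (F n))
    (m : Measure X) [IsProbabilityMeasure m] (μ : Measure (X × X)) [IsProbabilityMeasure μ]
    (hm : ∀ h : X → ℝ, Continuous h → Tendsto (fun n => ∫ x, h (F n x)) atTop (𝓝 (∫ x, h x ∂m)))
    (hμ : ∀ h : X × X → ℝ, Continuous h →
        Tendsto (fun n => ∫ q, h (F n q.1, F n q.2) ∂(ν n)) atTop (𝓝 (∫ q, h q ∂μ)))
    {k : ℕ} (hk : 0 < k) (g : Fin k → X → ℝ) (hg : IsSP k g) (hgi : ∀ i, ∫ x, g i x ∂m = 1 / k)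
    (M : Matrix (Fin k) (Fin k) ℝ) (hM : ∀ i j, M i j = ∫ q, g i q.1 * g j q.2 ∂μ)
    (U : Set (Matrix (Fin k) (Fin k) ℝ)) (hU : IsOpen U) (hMU : M ∈ U) :
    ∀ᶠ n in atTop, (kShape (ν n) k ∩ U).Nonempty := by
  obtain ⟨δ, hδ, H⟩ := correct_partition hk U hU M hMU
  obtain ⟨h, hsp, hc, h1, h2⟩ := exists_cont_approx hk m μ g hg
  have key : ∀ {u : ℕ → ℝ} {l c : ℝ}, Tendsto u atTop (𝓝 l) → |l - c| < δ → ∀ᶠ n in atTop, |u n - c| < δ := by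
    intro u l c hu hl
    exact ((hu.sub_const c).abs).eventually (gt_mem_nhds hl)
  have e1 : ∀ᶠ n in atTop, ∀ i, |(∫ x, h n i x ∂m) - 1 / k| < δ := by
    rw [eventually_all]
    intro i
    exact key (h1 i) (by rw [hgi]; simpa using hδ)
  have e2 : ∀ᶠ n in atTop, ∀ i j, |(∫ q, h n i q.1 * h n j q.2 ∂μ) - M i j| < δ := by
    rw [eventually_all]
    intro i
    rw [eventually_all]
    intro j
    exact key (h2 i j) (by rw [hM]; simpa using hδ)
  obtain ⟨t, ht1, ht2⟩ := (e1.and e2).exists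
  have e3 : ∀ᶠ n in atTop, ∀ i, |(∫ x, h t i (F n x)) - 1 / k| < δ := by
    rw [eventually_all]
    intro i
    exact key (hm _ (hc t i)) (ht1 i)
  have e4 : ∀ᶠ n in atTop, ∀ i j, |(∫ q, h t i (F n q.1) * h t j (F n q.2) ∂(ν n)) - M i j| < δ := by
    rw [eventually_all]
    intro i
    rw [eventually_all]
    intro j
    exact key (hμ (fun q => h t i q.1 * h t j q.2)
      (((hc t i).comp continuous_fst).mul ((hc t j).comp continuous_snd))) (ht2 i j)
  filter_upwards [e3, e4] with n h3 h4
  have := hν n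
  obtain ⟨N, hN, f, hf, hNf⟩ := H (ν n) (fun i x => h t i (F n x))
    ⟨fun i => ((hsp t).1 i).comp (hF n), fun i x => (hsp t).2.1 i _, fun x => (hsp t).2.2 _⟩ h3 h4
  exact ⟨N, subset_closure ⟨f, hf, hNf⟩, hN⟩

theorem kShape_subset (μ : Measure Sq) [IsProbabilityMeasure μ] (k : ℕ) :
    kShape μ k ⊆ (Set.univ.pi fun _ => Set.univ.pi fun _ => Set.Icc (0:ℝ) 1 : Set (Fin k → Fin k → ℝ)) := by
  refine closure_minimal ?_ ?_
  · rintro M ⟨f, hf, hM⟩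
    have hsp : IsSP k f := ⟨hf.1, hf.2.1, hf.2.2.1⟩
    intro i _ j _
    show M i j ∈ _
    rw [hM]
    constructor
    · exact integral_nonneg fun q => mul_nonneg (hsp.2.1 i _) (hsp.2.1 j _)
    · calc _ ≤ ∫ q, (1:ℝ) ∂μ := integral_mono (hsp.integrable_mul i j μ) (integrable_const _)
            (fun q => mul_le_one₀ (hsp.le_one i _) (hsp.2.1 j _) (hsp.le_one j _))
        _ = 1 := by simp
  · exact isClosed_set_pi fun _ _ => isClosed_set_pi fun _ _ => isClosed_Icc

theorem upper_vietoris {k : ℕ} (ν : ℕ → Measure Sq) (hν : ∀ n, IsProbabilityMeasure (ν n))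
    (A : Set (Matrix (Fin k) (Fin k) ℝ)) (hA : IsClosed A)
    (B : ℕ → Set (Matrix (Fin k) (Fin k) ℝ)) (hB : TopologicalSpace.IsTopologicalBasis (Set.range B))
    (Mn : ℕ → ℕ → Matrix (Fin k) (Fin k) ℝ) (hMn : ∀ n l, (kShape (ν n) k ∩ B l).Nonempty → Mn n l ∈ B l)
    (Ml : ℕ → Matrix (Fin k) (Fin k) ℝ) (hMl : ∀ l, Ml l ∈ A) (hlim : ∀ l, Tendsto (fun n => Mn n l) atTop (𝓝 (Ml l)))
    (U : Set (Matrix (Fin k) (Fin k) ℝ)) (hU : IsOpen U) (hAU : A ⊆ U) :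
    ∀ᶠ n in atTop, kShape (ν n) k ⊆ U := by
  let K : Set (Matrix (Fin k) (Fin k) ℝ) :=
    (Set.univ.pi fun _ => Set.univ.pi fun _ => Set.Icc (0:ℝ) 1 : Set (Fin k → Fin k → ℝ))
  have hK : IsCompact K := isCompact_univ_pi fun _ => isCompact_univ_pi fun _ => isCompact_Icc
  have hKU : IsCompact (K \ U) := hK.diff hU
  have main : ∀ᶠ n in atTop, Disjoint (kShape (ν n) k) (K \ U) := by
    refine hKU.induction_on (p := fun S => ∀ᶠ n in atTop, Disjoint (kShape (ν n) k) S) ?_ ?_ ?_ ?_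
    · simp
    · intro s t hst h
      filter_upwards [h] with n hn using hn.mono_right hst
    · intro s t hs ht
      filter_upwards [hs, ht] with n h1 h2 using h1.union_right h2
    · intro x hx
      have hxA : x ∈ Aᶜ := fun h => hx.2 (hAU h)
      have hT3 : RegularSpace (Matrix (Fin k) (Fin k) ℝ) := inferInstanceAs (RegularSpace (Fin k → Fin k → ℝ))
      obtain ⟨V, hV, hVc, hVA⟩ := exists_mem_nhds_isClosed_subset (hA.isOpen_compl.mem_nhds hxA)
      obtain ⟨_, ⟨l, rfl⟩, hxl, hlV⟩ := hB.mem_nhds_iff.1 hV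
      refine ⟨B l, mem_nhdsWithin_of_mem_nhds ((hB.isOpen ⟨l, rfl⟩).mem_nhds hxl), ?_⟩
      by_contra hcon
      rw [not_eventually] at hcon
      have hfr : ∃ᶠ n in atTop, Mn n l ∈ V := hcon.mono fun n hn =>
        hlV (hMn n l (Set.not_disjoint_iff_nonempty_inter.1 hn))
      exact hVA (hVc.mem_of_frequently_of_tendsto hfr (hlim l)) (hMl l)
  filter_upwards [main] with n hn x hx
  by_contra hxU
  have := hν n
  exact Set.disjoint_left.1 hn hx ⟨kShape_subset (ν n) k hx, hxU⟩

abbrev XX : Type := unitInterval × ((p : ℕ × ℕ) → stdSimplex ℝ (Fin (p.1 + 1)))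

theorem exists_choice (μ : Measure Sq) (k : ℕ) (hk : 0 < k) (B : Set (Matrix (Fin k) (Fin k) ℝ)) (hB : IsOpen B) :
    ∃ f : Fin k → unitInterval → ℝ, IsFracPartition k f ∧ ((kShape μ k ∩ B).Nonempty →
      (fun i j => ∫ p, f i p.1 * f j p.2 ∂μ : Matrix (Fin k) (Fin k) ℝ) ∈ B) := by
  by_cases h : (kShape μ k ∩ B).Nonempty
  · obtain ⟨x, hx, hxB⟩ := h
    obtain ⟨N, hN, f, hf, hM⟩ := mem_closure_iff.1 hx B hB hxB
    refine ⟨f, hf, fun _ => ?_⟩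
    have : (fun i j => ∫ p, f i p.1 * f j p.2 ∂μ : Matrix (Fin k) (Fin k) ℝ) = N :=
      funext fun i => funext fun j => (hM i j).symm
    rw [this]; exact hN
  · refine ⟨fun _ _ => 1 / k, ⟨fun _ => measurable_const, fun _ _ => by positivity, fun _ => ?_, fun _ => by simp⟩, fun h' => (h h').elim⟩
    have : (k:ℝ) ≠ 0 := by exact_mod_cast hk.ne'
    simp [this]

theorem exists_basis_seq (k : ℕ) : ∃ B : ℕ → Set (Matrix (Fin k) (Fin k) ℝ),
    TopologicalSpace.IsTopologicalBasis (Set.range B) := by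
  have : SecondCountableTopology (Matrix (Fin k) (Fin k) ℝ) := inferInstanceAs (SecondCountableTopology (Fin k → Fin k → ℝ))
  obtain ⟨b, hb, -, hB⟩ := TopologicalSpace.exists_countable_basis (Matrix (Fin k) (Fin k) ℝ)
  have hne : b.Nonempty := by
    obtain ⟨s, hs, -⟩ := hB.mem_nhds_iff.1 (univ_mem : Set.univ ∈ 𝓝 (0 : Matrix (Fin k) (Fin k) ℝ))
    exact ⟨s, hs⟩
  obtain ⟨B, rfl⟩ := hb.exists_eq_range hne
  exact ⟨B, hB⟩

theorem integral_map_mul {X : Type*} [MeasurableSpace X] (T : X → unitInterval) (hT : Measurable T)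
    (μ : Measure (X × X)) (a b : unitInterval → ℝ) (ha : Measurable a) (hb : Measurable b) :
    ∫ p : Sq, a p.1 * b p.2 ∂(μ.map (Prod.map T T)) = ∫ q, a (T q.1) * b (T q.2) ∂μ := by
  have h : Measurable (fun p : Sq => a p.1 * b p.2) := (ha.comp measurable_fst).mul (hb.comp measurable_snd)
  rw [integral_map (hT.prodMap hT).aemeasurable h.aestronglyMeasurable]
  rfl

/-- compactness of s-convergence. Every sequence of s-graphons has a
subsequence and an s-graphon `ν` such that for every `k ∈ ℕ`, the `k`-shapes along the
subsequence converge to `C(ν,k)` in the Vietoris topology on compact subsets of `ℝ^{k×k}`. -/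
theorem stmt15 (ν : ℕ → SGraphon) :
    ∃ φ : ℕ → ℕ, StrictMono φ ∧ ∃ νlim : SGraphon,
      ∀ k : ℕ, 0 < k →
        VietorisTendsto (fun j => kShape (ν (φ j)).toMeasure k) (kShape νlim.toMeasure k) := by
  choose B hB using exists_basis_seq
  have hBo : ∀ k l, IsOpen (B k l) := fun k l => (hB k).isOpen ⟨l, rfl⟩
  choose fr hfr hfrB using fun (n : ℕ) (p : ℕ × ℕ) =>
    exists_choice (ν n).toMeasure (p.1 + 1) p.1.succ_pos (B (p.1 + 1) p.2) (hBo _ _)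
  have hν : ∀ n, IsProbabilityMeasure (ν n).toMeasure := fun n => (ν n).1.2
  let F : ℕ → unitInterval → XX := fun n x => (x, fun p => ⟨fun i => fr n p i x, fun i => (hfr n p).2.1 i x, (hfr n p).2.2.1 x⟩)
  have hF : ∀ n, Measurable (F n) := fun n => measurable_id.prodMk (measurable_pi_lambda _ fun p =>
    (measurable_pi_lambda _ fun i => (hfr n p).1 i).subtype_mk)
  obtain ⟨φ, hφ, m, μ, hmP, hμP, hμs, hm, hμ⟩ := exists_weak_subseq (fun n => (ν n).toMeasure) hν (fun n => (ν n).2) F hF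
  have hfst : m.map Prod.fst = volume := by
    have := Measure.isProbabilityMeasure_map (μ := m) (measurable_fst (α := unitInterval) (β := ((p : ℕ × ℕ) → stdSimplex ℝ (Fin (p.1 + 1))))).aemeasurable
    refine ext_of_forall_integral_eq_of_IsFiniteMeasure fun h => ?_
    rw [integral_map measurable_fst.aemeasurable h.continuous.aestronglyMeasurable]
    refine tendsto_nhds_unique (hm (fun x => h x.1) (h.continuous.comp continuous_fst)) ?_
    exact tendsto_const_nhds
  have hna : NullSingletonClass m := by
    constructor
    intro x
    have h0 : m (Prod.fst ⁻¹' {x.1}) = 0 := by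
      rw [← Measure.map_apply measurable_fst (measurableSet_singleton _), hfst]; simp
    exact measure_mono_null (by rintro _ rfl; rfl) h0
  obtain ⟨T, S, hT, hS, hST, hmap⟩ := exists_embed m
  have hTT : Measurable (Prod.map T T) := hT.prodMap hT
  have hlimP : IsProbabilityMeasure (μ.map (Prod.map T T)) := Measure.isProbabilityMeasure_map hTT.aemeasurable
  have hlims : IsSymmSq (μ.map (Prod.map T T)) := by
    unfold IsSymmSq
    rw [Measure.map_map measurable_swap hTT]
    conv_rhs => rw [← hμs, Measure.map_map hTT measurable_swap]
    rfl
  refine ⟨φ, hφ, ⟨⟨μ.map (Prod.map T T), hlimP⟩, hlims⟩, ?_⟩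
  intro k hk
  change VietorisTendsto _ (kShape (μ.map (Prod.map T T)) k)
  constructor
  · intro U hU hAU
    obtain ⟨k, rfl⟩ : ∃ k', k = k' + 1 := ⟨k - 1, by omega⟩
    have hcc : ∀ l i, Continuous fun x : XX => (x.2 (k, l)).1 i := fun l i =>
      (continuous_apply i).comp (continuous_subtype_val.comp ((continuous_apply (k, l)).comp continuous_snd))
    refine upper_vietoris (fun n => (ν (φ n)).toMeasure) (fun n => hν _) _ isClosed_closure (B (k + 1)) (hB (k + 1))
      (fun n l => fun i j => ∫ p, fr (φ n) (k, l) i p.1 * fr (φ n) (k, l) j p.2 ∂(ν (φ n)).toMeasure)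
      (fun n l h => hfrB (φ n) (k, l) h)
      (fun l => fun i j => ∫ q : XX × XX, (q.1.2 (k, l)).1 i * (q.2.2 (k, l)).1 j ∂μ) ?_ ?_ U hU hAU
    · intro l
      apply subset_closure
      have hmeas : ∀ i, Measurable fun y => ((S y).2 (k, l)).1 i := fun i => (hcc l i).measurable.comp hS
      refine ⟨fun i y => ((S y).2 (k, l)).1 i, ⟨hmeas, fun i y => ((S y).2 (k, l)).2.1 i, fun y => ((S y).2 (k, l)).2.2, fun i => ?_⟩, fun i j => ?_⟩
      · rw [← hmap, integral_map hT.aemeasurable (hmeas i).aestronglyMeasurable]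
        simp only [hST]
        refine tendsto_nhds_unique (hm _ (hcc l i)) ?_
        refine tendsto_const_nhds.congr fun n => ?_
        exact ((hfr (φ n) (k, l)).2.2.2 i).symm
      · refine Eq.trans ?_ (integral_map_mul T hT μ _ _ (hmeas i) (hmeas j)).symm
        simp only [hST]
    · intro l
      refine tendsto_pi_nhds.2 fun i => tendsto_pi_nhds.2 fun j => ?_
      exact hμ (fun q => (q.1.2 (k, l)).1 i * (q.2.2 (k, l)).1 j)
        (((hcc l i).comp continuous_fst).mul ((hcc l j).comp continuous_snd))
  · rintro U hU ⟨x, hx, hxU⟩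
    obtain ⟨M, hMU, f, hf, hM⟩ := mem_closure_iff.1 hx U hU hxU
    refine lower_vietoris (fun n => (ν (φ n)).toMeasure) (fun n => hν _) (fun n => F (φ n)) (fun n => hF _) m μ hm hμ hk
      (fun i x => f i (T x)) ⟨fun i => (hf.1 i).comp hT, fun i x => hf.2.1 i _, fun x => hf.2.2.1 _⟩ ?_ M ?_ U hU hMU
    · intro i
      rw [← hf.2.2.2 i, ← hmap, integral_map hT.aemeasurable (hf.1 i).aestronglyMeasurable]
    · intro i j
      rw [hM]
      exact integral_map_mul T hT μ _ _ (hf.1 i) (hf.1 j)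

end
end

section
/- Let μ be an s-graphon, let k ∈ ℕ, and let M ∈ M_k* be such that μ_M belongs to the shape C(μ). Then for every ε > 0 there exists a continuous fairly distributed function f ∈ FDC such that |Φ(f,μ)(I_i × I_j) − μ_M(I_i × I_j)| < ε for all i,j = 1,…,k, where I_i = [(i−1)/k, i/k) for i < k and I_k = [(k−1)/k, 1]. -/
open MeasureTheory Topology Filter

noncomputable section

theorem Ik_frontier_null (k : ℕ) (i : Fin k) :
    (volume : Measure unitInterval) (frontier (Ik k i)) = 0 := by
  have key : ∀ s : Set ℝ, (frontier s).Finite →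
      (volume : Measure unitInterval) (frontier (Subtype.val ⁻¹' s : Set unitInterval)) = 0 := by
    intro s hs
    refine measure_mono_null (continuous_subtype_val.frontier_preimage_subset s) ?_
    exact (hs.preimage Subtype.val_injective.injOn).measure_zero _
  have hk : (0 : ℝ) < k := by exact_mod_cast i.pos
  unfold Ik
  split_ifs with h
  · apply key
    rw [frontier_Icc]
    · exact Set.toFinite _
    · rw [div_le_one hk]
      exact_mod_cast i.2.le
  · apply key
    rw [frontier_Ico]
    · exact Set.toFinite _
    · gcongr
      linarith

theorem IkIk_frontier_null (k : ℕ) (i j : Fin k) :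
    (volume : Measure Sq) (frontier (Ik k i ×ˢ Ik k j)) = 0 := by
  rw [frontier_prod_eq]
  refine measure_union_null ?_ ?_
  · rw [Measure.volume_eq_prod, Measure.prod_prod, Ik_frontier_null, mul_zero]
  · rw [Measure.volume_eq_prod, Measure.prod_prod, Ik_frontier_null, zero_mul]

/-- If `M ∈ M_k^*` is such that `μ_M` belongs to the shape `C(μ)` of an
s-graphon `μ`, then for every `ε > 0` there is a continuous fairly distributed `f` with
`|Φ(f,μ)(I_i × I_j) − μ_M(I_i × I_j)| < ε` for all `i,j`. -/
theorem stmt16 (μ : SGraphon) (k : ℕ) (hk : 0 < k) (M : Matrix (Fin k) (Fin k) ℝ)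
    (hM : M ∈ Mstar k) (ν : SGraphon) (hν : ν.toMeasure = muM M) (hmem : ν ∈ shape μ)
    (ε : ℝ) (hε : 0 < ε) :
    ∃ f : Sq → ℝ, FairlyDistributed f ∧ Continuous f ∧
      ∀ i j : Fin k,
        |(PhiMeas f μ.toMeasure (Ik k i ×ˢ Ik k j)).toReal -
          (muM M (Ik k i ×ˢ Ik k j)).toReal| < ε := by
  have hac : ν.toMeasure ≪ volume := by
    rw [hν, muM, dif_pos hk]
    exact withDensity_absolutelyContinuous _ _
  have hval : Tendsto (fun ρ : SGraphon => (ρ.1 : ProbabilityMeasure Sq)) (𝓝 ν) (𝓝 ν.1) :=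
    continuous_subtype_val.tendsto (show {μ : ProbabilityMeasure Sq // IsSymmSq (μ : Measure Sq)} from ν)
  have hev : ∀ᶠ ρ in 𝓝 ν, ∀ i j : Fin k,
      |(ρ.toMeasure (Ik k i ×ˢ Ik k j)).toReal - (muM M (Ik k i ×ˢ Ik k j)).toReal| < ε := by
    rw [eventually_all]
    intro i
    rw [eventually_all]
    intro j
    have h1 := ProbabilityMeasure.tendsto_measure_of_null_frontier_of_tendsto' hval
      (E := Ik k i ×ˢ Ik k j) (hac (IkIk_frontier_null k i j))
    have h2 := (ENNReal.tendsto_toReal (measure_ne_top (ν.1 : Measure Sq) _)).comp h1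
    have h3 := (Metric.tendsto_nhds.1 h2) ε hε
    rw [← hν]
    exact h3
  obtain ⟨ρ, ⟨f, hf, hfc, hρ⟩, hP⟩ := ((mem_closure_iff_frequently.1 hmem).and_eventually hev).exists
  refine ⟨f, hf, hfc, fun i j => ?_⟩
  rw [← hρ]
  exact hP i j

end
end

section
/- Let μ be an s-graphon, let k ∈ ℕ, let f_1,…,f_k be non-negative continuous functions on [0,1] whose sum is the constant function 1 and with ∫ f_i dλ = 1/k for each i, and let M(i,j) = ∫_{[0,1]²} f_i(x) f_j(y) dμ(x,y). Define g : [0,1]² → [0,k] by g(x,y) = k·f_i(x) for y ∈ I_i, where I_i = [(i−1)/k, i/k) for i < k and I_k = [(k−1)/k, 1]. Then g is a bounded Borel fairly distributed function and Φ(g,μ) = μ_M. -/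
open MeasureTheory Topology Filter

noncomputable section

lemma volume_gridIdx (k : ℕ) (hk : 0 < k) (i : Fin k) :
    volume (gridIdx k hk ⁻¹' {i}) = ENNReal.ofReal (1 / k) := by
  have hk' : (0 : ℝ) < k := by exact_mod_cast hk
  have hi := i.2
  have hir : ((i : ℕ) : ℝ) + 1 ≤ k := by exact_mod_cast hi
  have ha : (((i : ℕ) : ℝ) / k) ∈ unitInterval :=
    ⟨by positivity, by rw [div_le_one hk']; linarith⟩
  have hb : ((((i : ℕ) : ℝ) + 1) / k) ∈ unitInterval :=
    ⟨by positivity, by rw [div_le_one hk']; linarith⟩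
  by_cases h : (i : ℕ) + 1 = k
  · have : gridIdx k hk ⁻¹' {i} = Set.Ici ⟨_, ha⟩ := by
      ext u
      have hu : (0 : ℝ) ≤ (u : ℝ) * k := mul_nonneg u.2.1 hk'.le
      simp only [Set.mem_preimage, Set.mem_singleton_iff, Set.mem_Ici, gridIdx, Fin.ext_iff]
      rw [← Subtype.coe_le_coe]
      simp only
      rw [div_le_iff₀ hk', ← Nat.le_floor_iff hu]
      omega
    rw [this, unitInterval.volume_Ici]
    congr 1
    have : (k : ℝ) = (i : ℕ) + 1 := by exact_mod_cast h.symm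
    field_simp
    linarith
  · have : gridIdx k hk ⁻¹' {i} = Set.Ico ⟨_, ha⟩ ⟨_, hb⟩ := by
      ext u
      have hu : (0 : ℝ) ≤ (u : ℝ) * k := mul_nonneg u.2.1 hk'.le
      simp only [Set.mem_preimage, Set.mem_singleton_iff, Set.mem_Ico, gridIdx, Fin.ext_iff]
      rw [← Subtype.coe_le_coe, ← Subtype.coe_lt_coe]
      simp only
      have h3 : (u : ℝ) * k < ((i : ℕ) : ℝ) + 1 ↔ ⌊(u : ℝ) * k⌋₊ < (i : ℕ) + 1 := by
        rw [Nat.floor_lt hu]; push_cast; rfl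
      rw [div_le_iff₀ hk', lt_div_iff₀ hk', ← Nat.le_floor_iff hu, h3]
      omega
    rw [this, unitInterval.volume_Ico]
    congr 1
    simp only
    ring

lemma integral_gridIdx (k : ℕ) (hk : 0 < k) (h : Fin k → ℝ) :
    ∫ v, h (gridIdx k hk v) = ∑ i, (1 / k : ℝ) * h i := by
  have hm := measurable_gridIdx k hk
  have hh : Measurable h := measurable_from_top
  rw [← integral_map hm.aemeasurable hh.aestronglyMeasurable]
  have : IsFiniteMeasure (Measure.map (gridIdx k hk) volume) := inferInstance
  rw [integral_fintype .of_finite]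
  refine Finset.sum_congr rfl fun i _ => ?_
  rw [measureReal_def, Measure.map_apply hm (measurableSet_singleton i), volume_gridIdx,
    ENNReal.toReal_ofReal (by positivity), smul_eq_mul]

/-- Given an s-graphon `μ`, a fractional partition `f₁,…,f_k` by continuous
functions with density matrix `M`, the function `g(x,y) = k f_i(x)` for `y ∈ I_i` is a bounded
Borel fairly distributed function with values in `[0,k]`, and `Φ(g,μ) = μ_M`. -/
theorem stmt18 (μ : SGraphon) (k : ℕ) (hk : 0 < k) (F : Fin k → unitInterval → ℝ)
    (hcont : ∀ i, Continuous (F i)) (hnn : ∀ i x, 0 ≤ F i x)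
    (hsum : ∀ x, ∑ i, F i x = 1) (hint : ∀ i, ∫ x, F i x = 1 / k) :
    letI M : Matrix (Fin k) (Fin k) ℝ := fun i j => ∫ p, F i p.1 * F j p.2 ∂μ.toMeasure
    letI g : Sq → ℝ := fun p => (k : ℝ) * F (gridIdx k hk p.2) p.1
    FairlyDistributed g ∧ (∀ p, g p ≤ k) ∧ PhiMeas g μ.toMeasure = muM M := by
  have hk' : (0 : ℝ) < k := by exact_mod_cast hk
  have hF1 : ∀ i x, F i x ≤ 1 := fun i x => by
    rw [← hsum x]
    exact Finset.single_le_sum (f := fun i => F i x) (fun j _ => hnn j x) (Finset.mem_univ i)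
  have hle : ∀ p : Sq, (k : ℝ) * F (gridIdx k hk p.2) p.1 ≤ k := fun p =>
    mul_le_of_le_one_right hk'.le (hF1 _ _)
  refine ⟨⟨?_, fun p => mul_nonneg hk'.le (hnn _ _), ⟨k, hle⟩, fun x => ?_, fun y => ?_⟩, hle, ?_⟩
  · have h1 : Measurable fun q : unitInterval × Fin k => F q.2 q.1 :=
      measurable_from_prod_countable_left fun i => (hcont i).measurable
    exact (h1.comp (measurable_fst.prodMk
      ((measurable_gridIdx k hk).comp measurable_snd))).const_mul _
  · rw [integral_gridIdx k hk fun i => (k : ℝ) * F i x]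
    refine Eq.trans ?_ (hsum x)
    refine Finset.sum_congr rfl fun i _ => ?_
    field_simp
  · simp only
    rw [integral_const_mul, hint]
    field_simp
  · refine Eq.trans ?_ (dif_pos hk).symm
    rw [PhiMeas]
    congr 1
    funext p
    congr 1
    rw [phiFn, ← integral_const_mul]
    congr 1
    funext q
    ring

end
end
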